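/- Characterization of the achievable cost region for causal encoding and causal decoding (Theorem 1): A pair of Witsenhausen costs (P,S) ∈ ℝ² is achievable by control designs with causal encoder and causal decoder if and only if there exists a joint probability distribution of random variables (X_0, T, U_1, X_1, Y_1, U_2), where T takes values in a set of cardinality at most 2, which decomposes as P_{X_0} P_T P_{U_1|X_0,T} P_{X_1,Y_1|X_0,U_1} P_{U_2|T,Y_1} (i.e., X_0 is independent of T, the conditional law of (X_1,Y_1) given (X_0,U_1,T) is the Witsenhausen channel depending only on (X_0,U_1), and U_2 is conditionally independent of (X_0,U_1,X_1) given (T,Y_1)), such that P = E[U_1²] and S = E[(X_1 − U_2)²]. -/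

import Mathlib

/-!
Formalization of results from "Causal Vector-valued Witsenhausen Counterexamples with
Feedback" (Zhao, Le Treust, Oechtering).

Stochastic encoders/decoders (stochastic kernels) are realized as measurable functions of
independent i.i.d. randomization seeds, which is equivalent to the kernel formulation on
standard Borel spaces.
-/

open MeasureTheory ProbabilityTheory
open scoped ENNReal NNReal

namespace Witsenhausen

noncomputable section

/-- A path (block of length `n`) of real values. -/
abbrev Path (n : ℕ) : Type := Fin n → ℝ

/-- i.i.d. centered Gaussian vector of length `n` and variance `v`. -/
def iidGaussian (n : ℕ) (v : ℝ≥0) : Measure (Path n) :=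
  Measure.pi fun _ => gaussianReal 0 v

instance (n : ℕ) (v : ℝ≥0) : IsProbabilityMeasure (iidGaussian n v) := by
  unfold iidGaussian; infer_instance

/-- Canonical sample space: source `X₀ⁿ`, channel noise `Z₁ⁿ`, and the randomization seeds of
the (stochastic) encoder and decoder. -/
abbrev Sample (n : ℕ) : Type := Path n × Path n × Path n × Path n

/-- The base randomness: the i.i.d. `N(0,Q)` source `X₀ⁿ`, the independent i.i.d. `N(0,N)`
channel noise `Z₁ⁿ`, and independent i.i.d. randomization seeds for the stochastic encoder
and decoder. -/
def base (n : ℕ) (Q N : ℝ≥0) : Measure (Sample n) :=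
  (iidGaussian n Q).prod ((iidGaussian n N).prod
    ((iidGaussian n 1).prod (iidGaussian n 1)))

instance (n : ℕ) (Q N : ℝ≥0) : IsProbabilityMeasure (base n Q N) := by
  unfold base; infer_instance

/-- The source sequence `X₀ⁿ`. -/
def srcX0 {n : ℕ} (ω : Sample n) : Path n := ω.1
/-- The channel noise sequence `Z₁ⁿ`. -/
def noiseZ {n : ℕ} (ω : Sample n) : Path n := ω.2.1
/-- The encoder randomization seeds. -/
def seedV {n : ℕ} (ω : Sample n) : Path n := ω.2.2.1
/-- The decoder randomization seeds. -/
def seedW {n : ℕ} (ω : Sample n) : Path n := ω.2.2.2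

/-- The long-run input cost `c_P(u₁ⁿ) = (1/n) ∑_t u_{1,t}²`. -/
def costP {n : ℕ} (u : Path n) : ℝ := (1 / (n : ℝ)) * ∑ t, (u t) ^ 2

/-- The long-run estimation cost `c_S(x₁ⁿ, u₂ⁿ) = (1/n) ∑_t (x_{1,t} - u_{2,t})²`. -/
def costS {n : ℕ} (x u : Path n) : ℝ := (1 / (n : ℝ)) * ∑ t, (x t - u t) ^ 2

/-- A control design with causal encoder and causal decoder: at each time `t` the stochastic
encoder `f^t` observes `X₀^t` and the stochastic decoder `g^t` observes `Y₁^t` (stochastic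
maps are realized as measurable functions of independent randomization seeds). -/
structure Design (n : ℕ) where
  enc : Fin n → Path n → ℝ → ℝ
  dec : Fin n → Path n → ℝ → ℝ
  enc_meas : ∀ t, Measurable fun p : Path n × ℝ => enc t p.1 p.2
  dec_meas : ∀ t, Measurable fun p : Path n × ℝ => dec t p.1 p.2
  /-- causal encoding: `U_{1,t}` depends on the source only through `X₀^t`. -/
  enc_causal : ∀ (t : Fin n) (x x' : Path n) (v : ℝ),
    (∀ s, s ≤ t → x s = x' s) → enc t x v = enc t x' v
  /-- causal decoding: `U_{2,t}` depends on the channel output only through `Y₁^t`. -/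
  dec_causal : ∀ (t : Fin n) (y y' : Path n) (w : ℝ),
    (∀ s, s ≤ t → y s = y' s) → dec t y w = dec t y' w

namespace Design

variable {n : ℕ} (c : Design n)

/-- The control sequence `U₁ⁿ`. -/
def U1 (ω : Sample n) : Path n := fun t => c.enc t (srcX0 ω) (seedV ω t)
/-- The interim state `X₁ⁿ = X₀ⁿ + U₁ⁿ`. -/
def X1 (ω : Sample n) : Path n := fun t => srcX0 ω t + c.U1 ω t
/-- The channel output `Y₁ⁿ = X₁ⁿ + Z₁ⁿ`. -/
def Y1 (ω : Sample n) : Path n := fun t => c.X1 ω t + noiseZ ω t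
/-- The estimate sequence `U₂ⁿ`. -/
def U2 (ω : Sample n) : Path n := fun t => c.dec t (c.Y1 ω) (seedW ω t)

end Design

/-- `(P, S)` is an achievable pair of costs for causal encoding and causal decoding: for every
`ε > 0` there is `n₀` such that for every blocklength `n ≥ n₀` some control design makes the
expected cost deviation `E[|P - c_P(U₁ⁿ)| + |S - c_S(X₁ⁿ, U₂ⁿ)|]` at most `ε`.
This defines the region `R_ed`. -/
def achievable (Q N : ℝ≥0) (P S : ℝ) : Prop :=
  ∀ ε > (0 : ℝ), ∃ n₀ : ℕ, ∀ n ≥ n₀, ∃ c : Design n,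
    (∫⁻ ω, ENNReal.ofReal
        (|P - costP (c.U1 ω)| + |S - costS (c.X1 ω) (c.U2 ω)|) ∂(base n Q N))
      ≤ ENNReal.ofReal ε

/-- A single-letter joint distribution of `(X₀, T, U₁, X₁, Y₁, U₂)` decomposing according to
`P_{X₀} P_T P_{U₁|X₀,T} P_{X₁,Y₁|X₀,U₁} P_{U₂|T,Y₁}`: it is described by the distribution of
the time-sharing variable `T` (independent of `X₀ ~ N(0,Q)`), the conditional kernel
`P_{U₁|X₀,T}`, and the conditional kernel `P_{U₂|T,Y₁}`; the Witsenhausen channel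
`P_{X₁,Y₁|X₀,U₁}` is fixed. -/
structure SLDecomp (Q N : ℝ≥0) (T : Type) [MeasurableSpace T] where
  /-- the distribution `P_T` of the time-sharing variable -/
  μT : Measure T
  probT : IsProbabilityMeasure μT
  /-- the conditional distribution `P_{U₁|X₀,T}` -/
  κ1 : Kernel (ℝ × T) ℝ
  markov1 : IsMarkovKernel κ1
  /-- the conditional distribution `P_{U₂|T,Y₁}` -/
  κ2 : Kernel (T × ℝ) ℝ
  markov2 : IsMarkovKernel κ2

attribute [instance] SLDecomp.probT SLDecomp.markov1 SLDecomp.markov2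

namespace SLDecomp

/-- canonical coordinates `((((X₀, T), U₁), Z₁), U₂)` -/
abbrev Space (T : Type) : Type := (((ℝ × T) × ℝ) × ℝ) × ℝ

variable {Q N : ℝ≥0} {T : Type} [MeasurableSpace T]

def sX0 (q : Space T) : ℝ := q.1.1.1.1
def sT (q : Space T) : T := q.1.1.1.2
def sU1 (q : Space T) : ℝ := q.1.1.2
def sZ (q : Space T) : ℝ := q.1.2
def sU2 (q : Space T) : ℝ := q.2
def sX1 (q : Space T) : ℝ := sX0 q + sU1 q
def sY1 (q : Space T) : ℝ := sX1 q + sZ q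

/-- The joint law `P_{X₀} P_T P_{U₁|X₀,T} P_{X₁,Y₁|X₀,U₁} P_{U₂|T,Y₁}` on the canonical
space: `(X₀, T) ~ N(0,Q) ⊗ P_T`, then `U₁ ~ P_{U₁|X₀,T}`, then the memoryless Witsenhausen
channel is realized by an independent noise `Z₁ ~ N(0,N)` through `X₁ = X₀ + U₁` and
`Y₁ = X₁ + Z₁`, and finally `U₂ ~ P_{U₂|T,Y₁}`. -/
def measure (d : SLDecomp Q N T) : Measure (Space T) :=
  ((((gaussianReal 0 Q).prod d.μT) ⊗ₘ d.κ1).prod (gaussianReal 0 N)) ⊗ₘ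
    (d.κ2.comap (fun q : ((ℝ × T) × ℝ) × ℝ => (q.1.1.2, q.1.1.1 + q.1.2 + q.2))
      (by fun_prop))

instance (d : SLDecomp Q N T) : IsProbabilityMeasure d.measure := by
  unfold measure; infer_instance

/-- The induced single-letter joint law of `(X₀, T, U₁, X₁, Y₁, U₂)`. -/
def joint (d : SLDecomp Q N T) : Measure (ℝ × T × ℝ × ℝ × ℝ × ℝ) :=
  d.measure.map (fun q => (sX0 q, sT q, sU1 q, sX1 q, sY1 q, sU2 q))

/-- The pair `(P, S)` consists of the expected single-letter Witsenhausen costs of the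
decomposed distribution: `P = E[U₁²]` and `S = E[(X₁ - U₂)²]` (both finite). -/
def realizes (d : SLDecomp Q N T) (P S : ℝ) : Prop :=
  Integrable (fun q => (sU1 q) ^ 2) d.measure ∧
  Integrable (fun q => (sX1 q - sU2 q) ^ 2) d.measure ∧
  P = ∫ q, (sU1 q) ^ 2 ∂d.measure ∧
  S = ∫ q, (sX1 q - sU2 q) ^ 2 ∂d.measure

end SLDecomp

/-- The set of all convex combinations of two points of `A`. -/
def chordHull (A : Set (ℝ × ℝ)) : Set (ℝ × ℝ) :=
  {x | ∃ a ∈ A, ∃ b ∈ A, ∃ r ∈ Set.Icc (0 : ℝ) 1, x = r • a + (1 - r) • b}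

lemma subset_chordHull (A : Set (ℝ × ℝ)) : A ⊆ chordHull A :=
  fun a ha => ⟨a, ha, a, ha, 1, by simp, by simp⟩

lemma exists_half_le_of_mem_chordHull {A : Set (ℝ × ℝ)} {x : ℝ × ℝ} (hx : x ∈ chordHull A) :
    ∃ a ∈ A, ∃ b ∈ A, ∃ r ∈ Set.Icc (1 / 2 : ℝ) 1, x = r • a + (1 - r) • b := by
  obtain ⟨a, ha, b, hb, r, ⟨hr0, hr1⟩, rfl⟩ := hx
  rcases le_total (1 / 2) r with h | h
  · exact ⟨a, ha, b, hb, r, ⟨h, hr1⟩, rfl⟩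
  · refine ⟨b, hb, a, ha, 1 - r, ⟨by linarith, by linarith⟩, ?_⟩
    rw [add_comm, sub_sub_cancel]

open Filter Topology in
/-- For a closed upper set of the nonnegative quadrant, no closure is needed after forming chords:
a chord end point escaping to infinity carries vanishing weight. -/
lemma isClosed_chordHull {A : Set (ℝ × ℝ)} (hcl : IsClosed A) (hup : IsUpperSet A)
    (hnn : ∀ a ∈ A, 0 ≤ a) : IsClosed (chordHull A) := by
  rw [← isSeqClosed_iff_isClosed]
  intro x x₀ hx hlim
  choose a ha b hb r hr hxe using fun k => exists_half_le_of_mem_chordHull (hx k)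
  have h1 : Tendsto (fun k => (x k).1) atTop (𝓝 x₀.1) := (continuous_fst.tendsto _).comp hlim
  have h2 : Tendsto (fun k => (x k).2) atTop (𝓝 x₀.2) := (continuous_snd.tendsto _).comp hlim
  obtain ⟨M₁, hM₁⟩ := h1.bddAbove_range
  obtain ⟨M₂, hM₂⟩ := h2.bddAbove_range
  have hx1 : ∀ k, (x k).1 = r k * (a k).1 + (1 - r k) * (b k).1 := fun k => by
    have := congrArg Prod.fst (hxe k); simpa using this
  have hx2 : ∀ k, (x k).2 = r k * (a k).2 + (1 - r k) * (b k).2 := fun k => by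
    have := congrArg Prod.snd (hxe k); simpa using this
  have hxM₁ : ∀ k, (x k).1 ≤ M₁ := fun k => hM₁ ⟨k, rfl⟩
  have hxM₂ : ∀ k, (x k).2 ≤ M₂ := fun k => hM₂ ⟨k, rfl⟩
  have ha0 : ∀ k, 0 ≤ (a k).1 ∧ 0 ≤ (a k).2 := fun k => ⟨(hnn _ (ha k)).1, (hnn _ (ha k)).2⟩
  have hb0 : ∀ k, 0 ≤ (b k).1 ∧ 0 ≤ (b k).2 := fun k => ⟨(hnn _ (hb k)).1, (hnn _ (hb k)).2⟩
  have hbox : ∀ k, a k ∈ Set.Icc (0 : ℝ × ℝ) (2 * M₁, 2 * M₂) := by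
    intro k
    obtain ⟨hr1, hr2⟩ := hr k
    refine ⟨hnn _ (ha k), ?_, ?_⟩
    · have := hx1 k; have := hxM₁ k
      nlinarith [mul_nonneg (sub_nonneg.2 hr2) (hb0 k).1,
        mul_nonneg (sub_nonneg.2 hr1) (ha0 k).1]
    · have := hx2 k; have := hxM₂ k
      nlinarith [mul_nonneg (sub_nonneg.2 hr2) (hb0 k).2,
        mul_nonneg (sub_nonneg.2 hr1) (ha0 k).2]
  obtain ⟨⟨a₀, r₀⟩, har, φ, hφ, hφl⟩ :=
    (isCompact_Icc.prod (isCompact_Icc (a := (1 / 2 : ℝ)) (b := 1))).tendsto_subseq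
      (x := fun k => (a k, r k)) (fun k => ⟨hbox k, hr k⟩)
  have hal : Tendsto (fun k => a (φ k)) atTop (𝓝 a₀) := (continuous_fst.tendsto _).comp hφl
  have hrl : Tendsto (fun k => r (φ k)) atTop (𝓝 r₀) := (continuous_snd.tendsto _).comp hφl
  have ha₀ : a₀ ∈ A := hcl.mem_of_tendsto hal (Eventually.of_forall fun k => ha _)
  have hxl : Tendsto (fun k => x (φ k)) atTop (𝓝 x₀) := hlim.comp hφ.tendsto_atTop
  have hr₀ : r₀ ∈ Set.Icc (1 / 2 : ℝ) 1 := har.2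
  rcases eq_or_lt_of_le hr₀.2 with h | h
  · subst h
    apply subset_chordHull
    refine hup ?_ ha₀
    have hl : Tendsto (fun k => r (φ k) • a (φ k)) atTop (𝓝 ((1 : ℝ) • a₀)) := hrl.smul hal
    rw [one_smul] at hl
    refine le_of_tendsto_of_tendsto' hl hxl fun k => ?_
    rw [hxe (φ k)]
    exact le_add_of_nonneg_right
      (smul_nonneg (sub_nonneg.2 (hr _).2) (hnn _ (hb _)))
  · have hev : ∀ᶠ k in atTop, r (φ k) ≠ 1 :=
      (hrl.eventually_lt_const h).mono fun k hk => hk.ne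
    have hbl : Tendsto (fun k => b (φ k)) atTop (𝓝 ((1 - r₀)⁻¹ • (x₀ - r₀ • a₀))) := by
      have : Tendsto (fun k => (1 - r (φ k))⁻¹ • (x (φ k) - r (φ k) • a (φ k))) atTop
          (𝓝 ((1 - r₀)⁻¹ • (x₀ - r₀ • a₀))) :=
        ((tendsto_const_nhds.sub hrl).inv₀ (sub_ne_zero.2 h.ne')).smul
          (hxl.sub (hrl.smul hal))
      refine this.congr' (hev.mono fun k hk => ?_)
      rw [hxe (φ k), add_sub_cancel_left, smul_smul,
        inv_mul_cancel₀ (sub_ne_zero.2 (Ne.symm hk)), one_smul]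
    refine ⟨a₀, ha₀, _, hcl.mem_of_tendsto hbl (Eventually.of_forall fun k => hb _), r₀,
      ⟨by linarith [hr₀.1], hr₀.2⟩, ?_⟩
    rw [smul_smul, mul_inv_cancel₀ (sub_ne_zero.2 h.ne'), one_smul, add_sub_cancel]

lemma mem_chordHull_of_le {A : Set (ℝ × ℝ)} (hup : IsUpperSet A) {x y : ℝ × ℝ}
    (hx : x ∈ chordHull A) (hxy : x ≤ y) : y ∈ chordHull A := by
  obtain ⟨a, ha, b, hb, r, hr, rfl⟩ := hx
  set d := y - (r • a + (1 - r) • b)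
  have hd : 0 ≤ d := sub_nonneg.2 hxy
  refine ⟨a + d, hup (le_add_of_nonneg_right hd) ha, b + d, hup (le_add_of_nonneg_right hd) hb,
    r, hr, ?_⟩
  have : r • (a + d) + (1 - r) • (b + d) = r • a + (1 - r) • b + d := by module
  rw [this]; simp [d]

/-- Finite mixtures of points of a planar upper set are already two-point mixtures. -/
lemma sum_smul_mem_chordHull {A : Set (ℝ × ℝ)} (hup : IsUpperSet A) {ι : Type*} [Fintype ι]
    (w : ι → ℝ) (z : ι → ℝ × ℝ) (hw : ∀ i, 0 < w i) (hw1 : ∑ i, w i = 1) (hz : ∀ i, z i ∈ A) :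
    ∑ i, w i • z i ∈ chordHull A := by
  classical
  set x := ∑ i, w i • z i with hx
  have hx1 : ∑ i, w i * (z i).1 = x.1 := by simp [hx, Prod.fst_sum]
  have hx2 : ∑ i, w i * (z i).2 = x.2 := by simp [hx, Prod.snd_sum]
  by_contra hcon
  -- every chord over the abscissa of `x` passes strictly above `x`
  have key : ∀ i j, (z i).1 < x.1 → x.1 ≤ (z j).1 →
      x.2 * ((z j).1 - (z i).1) < (z i).2 * ((z j).1 - x.1) + (z j).2 * (x.1 - (z i).1) := by
    intro i j hi hj
    by_contra! hle
    have hpos : 0 < (z j).1 - (z i).1 := by linarith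
    apply hcon
    refine mem_chordHull_of_le hup (x := (((z j).1 - x.1) / ((z j).1 - (z i).1)) • z i +
      (1 - ((z j).1 - x.1) / ((z j).1 - (z i).1)) • z j) ?_ ?_
    · refine ⟨z i, hz i, z j, hz j, _, ⟨by apply div_nonneg <;> linarith, ?_⟩, rfl⟩
      rw [div_le_one hpos]; linarith
    · constructor
      · apply le_of_eq
        simp only [Prod.fst_add, Prod.smul_fst, smul_eq_mul]
        field_simp
        ring
      · simp only [Prod.snd_add, Prod.smul_snd, smul_eq_mul]
        have : ((z j).1 - x.1) / ((z j).1 - (z i).1) * (z i).2 +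
            (1 - ((z j).1 - x.1) / ((z j).1 - (z i).1)) * (z j).2 =
            ((z i).2 * ((z j).1 - x.1) + (z j).2 * (x.1 - (z i).1)) / ((z j).1 - (z i).1) := by
          field_simp
          ring
        rw [this, div_le_iff₀ hpos]
        exact hle
  have hup' : ∀ i, (z i).1 = x.1 → x.2 < (z i).2 := by
    intro i hi
    by_contra! hle
    exact hcon (subset_chordHull A (hup (Prod.le_def.2 ⟨hi.le, hle⟩) (hz i)))
  set L := Finset.univ.filter fun i => (z i).1 < x.1
  set R := Finset.univ.filter fun i => ¬ (z i).1 < x.1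
  have split (g : ι → ℝ) : ∑ i ∈ L, g i + ∑ i ∈ R, g i = ∑ i, g i :=
    Finset.sum_filter_add_sum_filter_not _ _ _
  have hM : ∑ i ∈ L, w i * (x.1 - (z i).1) = ∑ j ∈ R, w j * ((z j).1 - x.1) := by
    have h := split fun i => w i * ((z i).1 - x.1)
    have h0 : ∑ i, w i * ((z i).1 - x.1) = 0 := by
      simp only [mul_sub, Finset.sum_sub_distrib, hx1, ← Finset.sum_mul, hw1]; ring
    have hneg : ∑ i ∈ L, w i * (x.1 - (z i).1) = - ∑ i ∈ L, w i * ((z i).1 - x.1) := by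
      rw [← Finset.sum_neg_distrib]; exact Finset.sum_congr rfl fun i _ => by ring
    linarith
  rcases L.eq_empty_or_nonempty with hL | hL
  · rw [hL, Finset.sum_empty] at hM
    have hnn : ∀ j ∈ R, 0 ≤ w j * ((z j).1 - x.1) := fun j hj =>
      mul_nonneg (hw j).le (by have := (Finset.mem_filter.1 hj).2; linarith)
    have hall : ∀ j, (z j).1 = x.1 := by
      intro j
      have hj : j ∈ R := by
        by_contra hj
        have : j ∈ L := by simp [L, R] at hj ⊢; exact hj
        simp [hL] at this
      have := (Finset.sum_eq_zero_iff_of_nonneg hnn).1 hM.symm j hj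
      rcases mul_eq_zero.1 this with h | h
      · exact absurd h (hw j).ne'
      · linarith
    have hne : (Finset.univ : Finset ι).Nonempty := by
      by_contra h
      rw [Finset.not_nonempty_iff_eq_empty] at h
      rw [h] at hw1; simp at hw1
    have : ∑ i, w i * x.2 < ∑ i, w i * (z i).2 :=
      Finset.sum_lt_sum_of_nonempty hne fun i _ => mul_lt_mul_of_pos_left (hup' i (hall i)) (hw i)
    rw [← Finset.sum_mul, hw1, hx2] at this
    linarith
  · set M := ∑ i ∈ L, w i * (x.1 - (z i).1)
    have hMpos : 0 < M := Finset.sum_pos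
      (fun i hi => mul_pos (hw i) (by have := (Finset.mem_filter.1 hi).2; linarith)) hL
    have hR : R.Nonempty := by
      by_contra h
      rw [Finset.not_nonempty_iff_eq_empty] at h
      rw [h, Finset.sum_empty] at hM; linarith
    have hlt : ∑ i ∈ L, ∑ j ∈ R, w i * w j * (x.2 * ((z j).1 - (z i).1)) <
        ∑ i ∈ L, ∑ j ∈ R, w i * w j *
          ((z i).2 * ((z j).1 - x.1) + (z j).2 * (x.1 - (z i).1)) := by
      refine Finset.sum_lt_sum_of_nonempty hL fun i hi =>
        Finset.sum_lt_sum_of_nonempty hR fun j hj => ?_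
      exact mul_lt_mul_of_pos_left (key i j (Finset.mem_filter.1 hi).2
        (not_lt.1 (Finset.mem_filter.1 hj).2)) (mul_pos (hw i) (hw j))
    have e1 : ∑ i ∈ L, ∑ j ∈ R, w i * w j * (x.2 * ((z j).1 - (z i).1)) =
        x.2 * ((∑ i ∈ L, w i) * (∑ j ∈ R, w j * ((z j).1 - x.1)) +
          (∑ i ∈ L, w i * (x.1 - (z i).1)) * ∑ j ∈ R, w j) := by
      rw [Finset.sum_mul_sum, Finset.sum_mul_sum, ← Finset.sum_add_distrib, Finset.mul_sum]
      refine Finset.sum_congr rfl fun i _ => ?_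
      rw [← Finset.sum_add_distrib, Finset.mul_sum]
      exact Finset.sum_congr rfl fun j _ => by ring
    have e2 : ∑ i ∈ L, ∑ j ∈ R, w i * w j *
          ((z i).2 * ((z j).1 - x.1) + (z j).2 * (x.1 - (z i).1)) =
        (∑ i ∈ L, w i * (z i).2) * (∑ j ∈ R, w j * ((z j).1 - x.1)) +
          (∑ i ∈ L, w i * (x.1 - (z i).1)) * ∑ j ∈ R, w j * (z j).2 := by
      rw [Finset.sum_mul_sum, Finset.sum_mul_sum, ← Finset.sum_add_distrib]
      refine Finset.sum_congr rfl fun i _ => ?_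
      rw [← Finset.sum_add_distrib]
      exact Finset.sum_congr rfl fun j _ => by ring
    rw [e1, e2, ← hM] at hlt
    have s1 := split w
    have s2 := split fun i => w i * (z i).2
    rw [hw1] at s1
    rw [hx2] at s2
    have t1 : x.2 * ((∑ i ∈ L, w i) * M + M * ∑ j ∈ R, w j) = M * x.2 := by
      linear_combination x.2 * M * s1
    have t2 : (∑ i ∈ L, w i * (z i).2) * M + M * ∑ j ∈ R, w j * (z j).2 = M * x.2 := by
      linear_combination M * s2
    rw [t1, t2] at hlt
    exact lt_irrefl _ hlt

lemma chordHull_eq_convexHull {A : Set (ℝ × ℝ)} (hup : IsUpperSet A) :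
    chordHull A = convexHull ℝ A := by
  apply Set.Subset.antisymm
  · rintro _ ⟨a, ha, b, hb, r, hr, rfl⟩
    exact convex_convexHull ℝ A (subset_convexHull ℝ A ha) (subset_convexHull ℝ A hb)
      hr.1 (sub_nonneg.2 hr.2) (by ring)
  · intro x hx
    obtain ⟨ι, _, z, w, hz, -, hw, hw1, rfl⟩ := eq_pos_convex_span_of_mem_convexHull hx
    exact sum_smul_mem_chordHull hup w z hw hw1 fun i => hz ⟨i, rfl⟩

/-- Dual description of two-point mixtures: it suffices to test positive weightings of the two
coordinates. -/
lemma mem_chordHull_of_forall_le {A : Set (ℝ × ℝ)} (hcl : IsClosed A) (hup : IsUpperSet A)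
    (hnn : ∀ a ∈ A, 0 ≤ a) {x : ℝ × ℝ}
    (h : ∀ α β : ℝ, 0 < α → 0 < β → ∀ m : ℝ, (∀ a ∈ A, m ≤ α * a.1 + β * a.2) →
      m ≤ α * x.1 + β * x.2) : x ∈ chordHull A := by
  by_contra hx
  have hconv : Convex ℝ (chordHull A) := by
    rw [chordHull_eq_convexHull hup]; exact convex_convexHull ℝ A
  obtain ⟨f, u, hfx, hfA⟩ :=
    geometric_hahn_banach_point_closed hconv (isClosed_chordHull hcl hup hnn) hx
  have hf : ∀ p : ℝ × ℝ, f p = f (1, 0) * p.1 + f (0, 1) * p.2 := by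
    intro p
    have : p = p.1 • ((1 : ℝ), (0 : ℝ)) + p.2 • ((0 : ℝ), (1 : ℝ)) := by
      ext <;> simp
    conv_lhs => rw [this]
    rw [map_add, map_smul, map_smul, smul_eq_mul, smul_eq_mul]; ring
  rcases A.eq_empty_or_nonempty with hA | ⟨a, ha⟩
  · have := h 1 1 one_pos one_pos (1 * x.1 + 1 * x.2 + 1) (by simp [hA])
    linarith
  have ray : ∀ e : ℝ × ℝ, 0 ≤ e → 0 ≤ f e := by
    intro e he
    by_contra! hneg
    have hk : ∀ k : ℝ, 0 ≤ k → u < f a + k * f e := by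
      intro k hk
      have := hfA (a + k • e)
        (subset_chordHull A (hup (le_add_of_nonneg_right (smul_nonneg hk he)) ha))
      simpa using this
    have h0 := hk 0 le_rfl
    have := hk ((f a - u) / (- f e)) (div_nonneg (by linarith) (by linarith))
    have e1 : (f a - u) / (- f e) * f e = -(f a - u) := by
      have := hneg.ne
      field_simp
    rw [e1] at this
    linarith
  have hd : 0 < 2 * (|x.1 + x.2| + 1) := by positivity
  set ε := (u - f x) / (2 * (|x.1 + x.2| + 1)) with hε
  have hε0 : 0 < ε := div_pos (by linarith) hd
  have hα : 0 ≤ f (1, 0) := ray _ (by simp [Prod.le_def])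
  have hβ : 0 ≤ f (0, 1) := ray _ (by simp [Prod.le_def])
  have hle := h (f (1, 0) + ε) (f (0, 1) + ε) (by linarith) (by linarith) u fun b hb => by
    have h1 := hfA b (subset_chordHull A hb)
    rw [hf] at h1
    nlinarith [mul_nonneg hε0.le (hnn b hb).1, mul_nonneg hε0.le (hnn b hb).2]
  have hεx : ε * (x.1 + x.2) < u - f x := by
    have h1 : ε * (2 * (|x.1 + x.2| + 1)) = u - f x := by rw [hε]; field_simp
    nlinarith [mul_le_mul_of_nonneg_left (le_abs_self (x.1 + x.2)) hε0.le,
      mul_nonneg hε0.le (abs_nonneg (x.1 + x.2))]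
  have := hf x
  linarith

/-- The unnormalised `j`-th posterior moment of a state with law `ν`, given that its observation
in Gaussian noise of variance `N` equals `y`. -/
def outMoment (N : ℝ≥0) (ν : Measure ℝ) (j : ℕ) (y : ℝ) : ℝ :=
  ∫ x, x ^ j * gaussianPDFReal x N y ∂ν

/-- The conditional mean estimator of a state with law `ν` from its noisy observation. -/
def bayesDec (N : ℝ≥0) (ν : Measure ℝ) (y : ℝ) : ℝ := outMoment N ν 1 y / outMoment N ν 0 y

/-- The density with respect to Lebesgue measure of the minimum mean square error. -/
def bayesRisk (N : ℝ≥0) (ν : Measure ℝ) (y : ℝ) : ℝ :=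
  outMoment N ν 2 y - outMoment N ν 1 y ^ 2 / outMoment N ν 0 y

/-- The minimum mean square error for a state with law `ν` observed in Gaussian noise of
variance `N`. -/
def mmse (N : ℝ≥0) (ν : Measure ℝ) : ℝ≥0∞ := ∫⁻ y, ENNReal.ofReal (bayesRisk N ν y)

lemma continuous_gaussianPDFReal_mean (N : ℝ≥0) (y : ℝ) :
    Continuous fun x => gaussianPDFReal x N y := by
  unfold gaussianPDFReal; fun_prop

lemma exists_bound_pow_mul_gaussianPDFReal (N : ℝ≥0) (hN : 0 < N) {j : ℕ} (hj : j ≤ 2) (y : ℝ) :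
    ∃ C, ∀ x, ‖x ^ j * gaussianPDFReal x N y‖ ≤ C := by
  have hN' : (0 : ℝ) < N := hN
  refine ⟨(√(2 * Real.pi * N))⁻¹ * (1 + 2 * y ^ 2 + 4 * N), fun x => ?_⟩
  rw [norm_mul, Real.norm_of_nonneg (gaussianPDFReal_nonneg _ _ _), gaussianPDFReal, norm_pow,
    Real.norm_eq_abs, mul_left_comm]
  refine mul_le_mul_of_nonneg_left ?_ (by positivity)
  have hpow : |x| ^ j ≤ 1 + x ^ 2 := by
    interval_cases j
    · simp; positivity
    · rw [pow_one, ← sq_abs]; nlinarith [sq_nonneg (|x| - 1), sq_nonneg |x|]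
    · simp
  set s := (y - x) ^ 2 / (2 * (N : ℝ)) with hs
  have hs0 : 0 ≤ s := by positivity
  have he : -(y - x) ^ 2 / (2 * (N : ℝ)) = -s := by rw [hs]; ring
  rw [he]
  have hsN : (y - x) ^ 2 = 2 * N * s := by rw [hs]; field_simp
  have h1 : Real.exp (-s) ≤ 1 := Real.exp_le_one_iff.2 (by linarith)
  have h2 : s * Real.exp (-s) ≤ 1 := by
    rw [Real.exp_neg, ← div_eq_mul_inv, div_le_one (Real.exp_pos _)]
    linarith [Real.add_one_le_exp s]
  have h3 : x ^ 2 ≤ 2 * y ^ 2 + 4 * N * s := by nlinarith [sq_nonneg (2 * y - x)]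
  have hexp := (Real.exp_pos (-s)).le
  calc |x| ^ j * Real.exp (-s) ≤ (1 + (2 * y ^ 2 + 4 * N * s)) * Real.exp (-s) := by
        gcongr; linarith
    _ = (1 + 2 * y ^ 2) * Real.exp (-s) + 4 * N * (s * Real.exp (-s)) := by ring
    _ ≤ (1 + 2 * y ^ 2) * 1 + 4 * N * 1 := by gcongr
    _ = 1 + 2 * y ^ 2 + 4 * N := by ring

lemma integrable_pow_mul_gaussianPDFReal {N : ℝ≥0} (hN : 0 < N) (ν : Measure ℝ)
    [IsFiniteMeasure ν] {j : ℕ} (hj : j ≤ 2) (y : ℝ) :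
    Integrable (fun x => x ^ j * gaussianPDFReal x N y) ν := by
  obtain ⟨C, hC⟩ := exists_bound_pow_mul_gaussianPDFReal N hN hj y
  refine Integrable.of_bound (C := C) ?_ (Filter.Eventually.of_forall hC)
  exact ((continuous_pow j).mul (continuous_gaussianPDFReal_mean N y)).aestronglyMeasurable

lemma measurable_outMoment (N : ℝ≥0) (ν : Measure ℝ) [IsFiniteMeasure ν] (j : ℕ) :
    Measurable (outMoment N ν j) := by
  have h : Measurable fun p : ℝ × ℝ => p.2 ^ j * gaussianPDFReal p.2 N p.1 := by
    unfold gaussianPDFReal; fun_prop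
  exact (h.stronglyMeasurable.integral_prod_right' (ν := ν)).measurable

lemma measurable_bayesDec (N : ℝ≥0) (ν : Measure ℝ) [IsFiniteMeasure ν] :
    Measurable (bayesDec N ν) :=
  (measurable_outMoment N ν 1).div (measurable_outMoment N ν 0)

lemma measurable_bayesRisk (N : ℝ≥0) (ν : Measure ℝ) [IsFiniteMeasure ν] :
    Measurable (bayesRisk N ν) :=
  (measurable_outMoment N ν 2).sub
    (((measurable_outMoment N ν 1).pow_const 2).div (measurable_outMoment N ν 0))

lemma outMoment_zero_pos {N : ℝ≥0} (hN : 0 < N) (ν : Measure ℝ) [IsProbabilityMeasure ν] (y : ℝ) :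
    0 < outMoment N ν 0 y := by
  have hi := integrable_pow_mul_gaussianPDFReal hN ν (Nat.zero_le 2) y
  have hpos : ∀ x, 0 < x ^ 0 * gaussianPDFReal x N y := fun x => by
    rw [pow_zero, one_mul]; exact gaussianPDFReal_pos _ _ _ hN.ne'
  refine (integral_pos_iff_support_of_nonneg (fun x => (hpos x).le) hi).2 ?_
  have : Function.support (fun x => x ^ 0 * gaussianPDFReal x N y) = Set.univ :=
    Set.eq_univ_of_forall fun x => (hpos x).ne'
  rw [this]; simp

lemma lintegral_gaussianPDF_mul_sq {N : ℝ≥0} (hN : 0 < N) (ν : Measure ℝ)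
    [IsProbabilityMeasure ν] (u y : ℝ) :
    ∫⁻ x, gaussianPDF x N y * ENNReal.ofReal ((x - u) ^ 2) ∂ν =
      ENNReal.ofReal (outMoment N ν 2 y - 2 * u * outMoment N ν 1 y +
        u ^ 2 * outMoment N ν 0 y) := by
  have h2 := integrable_pow_mul_gaussianPDFReal hN ν le_rfl y
  have h1 := integrable_pow_mul_gaussianPDFReal hN ν one_le_two y
  have h0 := integrable_pow_mul_gaussianPDFReal hN ν (Nat.zero_le 2) y
  have hfun : (fun x => x ^ 2 * gaussianPDFReal x N y - 2 * u * (x ^ 1 * gaussianPDFReal x N y) +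
      u ^ 2 * (x ^ 0 * gaussianPDFReal x N y)) =
      fun x => gaussianPDFReal x N y * (x - u) ^ 2 := by
    funext x; ring
  have hsub : Integrable (fun x => x ^ 2 * gaussianPDFReal x N y -
      2 * u * (x ^ 1 * gaussianPDFReal x N y)) ν := h2.sub (h1.const_mul (2 * u))
  have hint := hsub.add (h0.const_mul (u ^ 2))
  have heq : outMoment N ν 2 y - 2 * u * outMoment N ν 1 y + u ^ 2 * outMoment N ν 0 y =
      ∫ x, gaussianPDFReal x N y * (x - u) ^ 2 ∂ν := by
    rw [← hfun, integral_add hsub (h0.const_mul (u ^ 2)),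
      integral_sub h2 (h1.const_mul (2 * u)), integral_const_mul, integral_const_mul]
    rfl
  have hint' : Integrable (fun x => gaussianPDFReal x N y * (x - u) ^ 2) ν := by
    rw [← hfun]; exact hint
  rw [heq, ofReal_integral_eq_lintegral_ofReal hint' (Filter.Eventually.of_forall fun x =>
    mul_nonneg (gaussianPDFReal_nonneg _ _ _) (sq_nonneg _))]
  refine lintegral_congr fun x => ?_
  rw [ENNReal.ofReal_mul (gaussianPDFReal_nonneg _ _ _), gaussianPDF]

lemma ofReal_bayesRisk_le {N : ℝ≥0} (hN : 0 < N) (ν : Measure ℝ) [IsProbabilityMeasure ν]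
    (u y : ℝ) :
    ENNReal.ofReal (bayesRisk N ν y) ≤
      ∫⁻ x, gaussianPDF x N y * ENNReal.ofReal ((x - u) ^ 2) ∂ν := by
  rw [lintegral_gaussianPDF_mul_sq hN]
  apply ENNReal.ofReal_le_ofReal
  have h0 := outMoment_zero_pos hN ν y
  have : outMoment N ν 2 y - 2 * u * outMoment N ν 1 y + u ^ 2 * outMoment N ν 0 y -
      bayesRisk N ν y =
      (u * outMoment N ν 0 y - outMoment N ν 1 y) ^ 2 / outMoment N ν 0 y := by
    unfold bayesRisk; field_simp; ring
  have : 0 ≤ (u * outMoment N ν 0 y - outMoment N ν 1 y) ^ 2 / outMoment N ν 0 y := by positivity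
  linarith

lemma ofReal_bayesRisk_eq {N : ℝ≥0} (hN : 0 < N) (ν : Measure ℝ) [IsProbabilityMeasure ν]
    (y : ℝ) :
    ∫⁻ x, gaussianPDF x N y * ENNReal.ofReal ((x - bayesDec N ν y) ^ 2) ∂ν =
      ENNReal.ofReal (bayesRisk N ν y) := by
  rw [lintegral_gaussianPDF_mul_sq hN]
  congr 1
  have h0 := outMoment_zero_pos hN ν y
  unfold bayesRisk bayesDec; field_simp; ring

/-- Tonelli for the additive Gaussian channel, with the output integrated last. -/
lemma lintegral_channel_eq {N : ℝ≥0} (hN : 0 < N) (ν : Measure ℝ) [SFinite ν]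
    (F : ℝ → ℝ → ℝ≥0∞) (hF : Measurable (Function.uncurry F)) :
    ∫⁻ x, ∫⁻ z, F x (x + z) ∂gaussianReal 0 N ∂ν =
      ∫⁻ y, ∫⁻ x, gaussianPDF x N y * F x y ∂ν := by
  have hm : Measurable (Function.uncurry fun y x => gaussianPDF x N y * F x y) := by
    have h1 : Measurable fun p : ℝ × ℝ => gaussianPDF p.2 N p.1 := by
      unfold gaussianPDF gaussianPDFReal; fun_prop
    have h2 : Measurable fun p : ℝ × ℝ => F p.2 p.1 := hF.comp measurable_swap
    exact h1.mul h2
  rw [lintegral_lintegral_swap (f := fun y x => gaussianPDF x N y * F x y) hm.aemeasurable]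
  refine lintegral_congr fun x => ?_
  have hFx : Measurable (F x) := hF.of_uncurry_left
  have hmap : (gaussianReal 0 N).map (fun z => x + z) = gaussianReal x N := by
    rw [gaussianReal_map_const_add, zero_add]
  rw [← lintegral_map (f := F x) (g := fun z => x + z) hFx (by fun_prop), hmap,
    gaussianReal_of_var_ne_zero x hN.ne',
    lintegral_withDensity_eq_lintegral_mul _ (measurable_gaussianPDF x N) hFx]
  rfl

lemma mmse_le_lintegral {N : ℝ≥0} (hN : 0 < N) (ν : Measure ℝ) [IsProbabilityMeasure ν]
    {W : Type*} [MeasurableSpace W] (κ : Kernel ℝ W) [IsMarkovKernel κ] (G : ℝ → W → ℝ)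
    (hG : Measurable (Function.uncurry G)) :
    mmse N ν ≤ ∫⁻ x, ∫⁻ z, ∫⁻ w, ENNReal.ofReal ((x - G (x + z) w) ^ 2) ∂κ (x + z)
      ∂gaussianReal 0 N ∂ν := by
  have hm : Measurable fun q : (ℝ × ℝ) × W => ENNReal.ofReal ((q.1.1 - G q.1.2 q.2) ^ 2) := by
    have : Measurable fun q : (ℝ × ℝ) × W => G q.1.2 q.2 :=
      hG.comp ((measurable_snd.comp measurable_fst).prodMk measurable_snd)
    fun_prop
  have hF : Measurable (Function.uncurry fun x y =>
      ∫⁻ w, ENNReal.ofReal ((x - G y w) ^ 2) ∂κ y) :=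
    Measurable.lintegral_kernel_prod_right' (κ := κ.comap Prod.snd measurable_snd) hm
  rw [lintegral_channel_eq hN ν (fun x y => ∫⁻ w, ENNReal.ofReal ((x - G y w) ^ 2) ∂κ y) hF, mmse]
  refine lintegral_mono fun y => ?_
  have hGy : Measurable (G y) := hG.of_uncurry_left
  have hpy : Measurable fun x => gaussianPDF x N y := by
    unfold gaussianPDF gaussianPDFReal; fun_prop
  have hxw : Measurable fun q : ℝ × W =>
      gaussianPDF q.1 N y * ENNReal.ofReal ((q.1 - G y q.2) ^ 2) := by fun_prop
  calc ENNReal.ofReal (bayesRisk N ν y)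
      = ∫⁻ _ : W, ENNReal.ofReal (bayesRisk N ν y) ∂κ y := by simp
    _ ≤ ∫⁻ w, ∫⁻ x, gaussianPDF x N y * ENNReal.ofReal ((x - G y w) ^ 2) ∂ν ∂κ y :=
        lintegral_mono fun w => ofReal_bayesRisk_le hN ν _ y
    _ = ∫⁻ x, ∫⁻ w, gaussianPDF x N y * ENNReal.ofReal ((x - G y w) ^ 2) ∂κ y ∂ν :=
        (lintegral_lintegral_swap hxw.aemeasurable).symm
    _ = ∫⁻ x, gaussianPDF x N y * ∫⁻ w, ENNReal.ofReal ((x - G y w) ^ 2) ∂κ y ∂ν := by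
        refine lintegral_congr fun x => lintegral_const_mul _ ?_
        fun_prop

lemma lintegral_bayesDec_eq_mmse {N : ℝ≥0} (hN : 0 < N) (ν : Measure ℝ)
    [IsProbabilityMeasure ν] :
    ∫⁻ x, ∫⁻ z, ENNReal.ofReal ((x - bayesDec N ν (x + z)) ^ 2) ∂gaussianReal 0 N ∂ν =
      mmse N ν := by
  have hb := measurable_bayesDec N ν
  rw [lintegral_channel_eq hN ν (fun x y => ENNReal.ofReal ((x - bayesDec N ν y) ^ 2))
    (by unfold Function.uncurry; fun_prop)]
  exact lintegral_congr fun y => ofReal_bayesRisk_eq hN ν y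

open Filter Topology in
lemma tendsto_outMoment {N : ℝ≥0} (hN : 0 < N) {j : ℕ} (hj : j ≤ 2) (y : ℝ)
    {ν : ℕ → ProbabilityMeasure ℝ} {ν₀ : ProbabilityMeasure ℝ} (h : Tendsto ν atTop (𝓝 ν₀)) :
    Tendsto (fun k => outMoment N (ν k) j y) atTop (𝓝 (outMoment N ν₀ j y)) := by
  obtain ⟨C, hC⟩ := exists_bound_pow_mul_gaussianPDFReal N hN hj y
  exact (ProbabilityMeasure.tendsto_iff_forall_integral_tendsto.1 h)
    (BoundedContinuousFunction.ofNormedAddCommGroup (fun x => x ^ j * gaussianPDFReal x N y)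
      ((continuous_pow j).mul (continuous_gaussianPDFReal_mean N y)) C hC)

open Filter Topology in
/-- Lower semicontinuity of the minimum mean square error under weak convergence. -/
lemma mmse_le_liminf {N : ℝ≥0} (hN : 0 < N)
    {ν : ℕ → ProbabilityMeasure ℝ} {ν₀ : ProbabilityMeasure ℝ} (h : Tendsto ν atTop (𝓝 ν₀)) :
    mmse N ν₀ ≤ liminf (fun k => mmse N (ν k)) atTop := by
  have hpt : ∀ y, Tendsto (fun k => ENNReal.ofReal (bayesRisk N (ν k) y)) atTop
      (𝓝 (ENNReal.ofReal (bayesRisk N ν₀ y))) := fun y =>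
    (ENNReal.continuous_ofReal.tendsto _).comp
      ((tendsto_outMoment hN le_rfl y h).sub
        (((tendsto_outMoment hN one_le_two y h).pow 2).div
          (tendsto_outMoment hN (Nat.zero_le 2) y h) (outMoment_zero_pos hN _ y).ne'))
  calc mmse N ν₀ = ∫⁻ y, liminf (fun k => ENNReal.ofReal (bayesRisk N (ν k) y)) atTop :=
        lintegral_congr fun y => (hpt y).liminf_eq.symm
    _ ≤ _ := lintegral_liminf_le fun k => (measurable_bayesRisk N (ν k)).ennreal_ofReal

/-- The cost pairs dominating those of a memoryless encoder, described by the joint law of the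
source letter and the control, followed by optimal memoryless decoding. -/
def oneShot (Q N : ℝ≥0) : Set (ℝ × ℝ) :=
  {a | 0 ≤ a ∧ ∃ π : ProbabilityMeasure (ℝ × ℝ), (π : Measure (ℝ × ℝ)).fst = gaussianReal 0 Q ∧
    ∫⁻ q, ENNReal.ofReal (q.2 ^ 2) ∂(π : Measure (ℝ × ℝ)) ≤ ENNReal.ofReal a.1 ∧
    mmse N ((π : Measure (ℝ × ℝ)).map fun q => q.1 + q.2) ≤ ENNReal.ofReal a.2}

lemma isUpperSet_oneShot (Q N : ℝ≥0) : IsUpperSet (oneShot Q N) := by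
  rintro a b hab ⟨h0, π, h1, h2, h3⟩
  exact ⟨h0.trans hab, π, h1, h2.trans (ENNReal.ofReal_le_ofReal hab.1),
    h3.trans (ENNReal.ofReal_le_ofReal hab.2)⟩

lemma nonneg_of_mem_oneShot {Q N : ℝ≥0} : ∀ a ∈ oneShot Q N, 0 ≤ a := fun _ h => h.1

/-- Laws on the plane with a common first marginal and bounded second moment of the second
coordinate are tight. -/
lemma isTightMeasureSet_of_fst_eq_of_lintegral_sq_le {μ : Measure ℝ} [IsFiniteMeasure μ] {C : ℝ≥0}
    {s : Set (Measure (ℝ × ℝ))} (hfst : ∀ π ∈ s, π.fst = μ)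
    (hsnd : ∀ π ∈ s, ∫⁻ q, ENNReal.ofReal (q.2 ^ 2) ∂π ≤ C) : IsTightMeasureSet s := by
  refine IsTightMeasureSet.prodMk ?_ ?_
  · refine (isTightMeasureSet_singleton (μ := μ)).subset ?_
    rintro _ ⟨π, hπ, rfl⟩
    exact hfst π hπ
  · refine isTightMeasureSet_iff_exists_isCompact_measure_compl_le.2 fun ε hε => ?_
    by_cases hε' : ε = ∞
    · exact ⟨∅, isCompact_empty, fun _ _ => by simp [hε']⟩
    have hεr : 0 < ε.toReal := ENNReal.toReal_pos hε.ne' hε'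
    set R : ℝ := √((C + 1) / ε.toReal)
    have hR : 0 < (C + 1) / ε.toReal := by positivity
    refine ⟨Set.Icc (-R) R, isCompact_Icc, ?_⟩
    rintro _ ⟨π, hπ, rfl⟩
    rw [Measure.snd, Measure.map_apply measurable_snd measurableSet_Icc.compl]
    have hsub : Prod.snd ⁻¹' (Set.Icc (-R) R)ᶜ ⊆
        {q : ℝ × ℝ | ENNReal.ofReal ((C + 1) / ε.toReal) ≤ ENNReal.ofReal (q.2 ^ 2)} := by
      intro q hq
      have hq' : ¬ |q.2| ≤ R := fun h => hq (abs_le.1 h)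
      apply ENNReal.ofReal_le_ofReal
      rw [← sq_abs, ← Real.sq_sqrt hR.le]
      exact pow_le_pow_left₀ (Real.sqrt_nonneg _) (not_le.1 hq').le 2
    have hmarkov := mul_meas_ge_le_lintegral₀ (μ := π)
      (f := fun q : ℝ × ℝ => ENNReal.ofReal (q.2 ^ 2)) (by fun_prop)
      (ENNReal.ofReal ((C + 1) / ε.toReal))
    have hne : ENNReal.ofReal ((C + 1) / ε.toReal) ≠ 0 := (ENNReal.ofReal_pos.2 hR).ne'
    calc π (Prod.snd ⁻¹' (Set.Icc (-R) R)ᶜ)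
        ≤ π {q | ENNReal.ofReal ((C + 1) / ε.toReal) ≤ ENNReal.ofReal (q.2 ^ 2)} :=
          measure_mono hsub
      _ ≤ C / ENNReal.ofReal ((C + 1) / ε.toReal) := by
          rw [ENNReal.le_div_iff_mul_le (Or.inl hne) (Or.inl ENNReal.ofReal_ne_top), mul_comm]
          exact hmarkov.trans (hsnd π hπ)
      _ ≤ ε := by
          rw [ENNReal.div_le_iff hne ENNReal.ofReal_ne_top]
          nth_rw 1 [← ENNReal.ofReal_toReal hε']
          rw [← ENNReal.ofReal_mul hεr.le, mul_div_cancel₀ _ hεr.ne',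
            ← ENNReal.ofReal_coe_nnreal]
          exact ENNReal.ofReal_le_ofReal (by linarith)

open Filter Topology in
lemma isClosed_oneShot (Q : ℝ≥0) {N : ℝ≥0} (hN : 0 < N) : IsClosed (oneShot Q N) := by
  rw [← isSeqClosed_iff_isClosed]
  intro a a₀ ha hlim
  choose h0 π hπ1 hπ2 hπ3 using ha
  have h1 : Tendsto (fun k => (a k).1) atTop (𝓝 a₀.1) := (continuous_fst.tendsto _).comp hlim
  have h2 : Tendsto (fun k => (a k).2) atTop (𝓝 a₀.2) := (continuous_snd.tendsto _).comp hlim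
  obtain ⟨C, hC⟩ := h1.bddAbove_range
  have htight : IsTightMeasureSet
      {((μ : ProbabilityMeasure (ℝ × ℝ)) : Measure (ℝ × ℝ)) | μ ∈ Set.range π} := by
    refine isTightMeasureSet_of_fst_eq_of_lintegral_sq_le (μ := gaussianReal 0 Q)
      (C := C.toNNReal) ?_ ?_
    · rintro _ ⟨_, ⟨k, rfl⟩, rfl⟩
      exact hπ1 k
    · rintro _ ⟨_, ⟨k, rfl⟩, rfl⟩
      exact (hπ2 k).trans (ENNReal.ofReal_le_ofReal (hC ⟨k, rfl⟩))
  obtain ⟨π₀, -, φ, hφ, hφl⟩ := (isCompact_closure_of_isTightMeasureSet htight).tendsto_subseq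
    (x := π) fun k => subset_closure ⟨k, rfl⟩
  refine ⟨ge_of_tendsto' hlim h0, π₀, ?_, ?_, ?_⟩
  · have hl := ProbabilityMeasure.tendsto_map_of_tendsto_of_continuous _ _ hφl
      (continuous_fst (X := ℝ) (Y := ℝ))
    have hc : (fun i => ((π ∘ φ) i).map (continuous_fst (X := ℝ) (Y := ℝ)).measurable.aemeasurable)
        = fun _ => (⟨gaussianReal 0 Q, inferInstance⟩ : ProbabilityMeasure ℝ) := by
      funext i
      exact Subtype.ext (hπ1 (φ i))
    rw [hc] at hl
    have he := tendsto_nhds_unique hl tendsto_const_nhds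
    exact congrArg (fun μ : ProbabilityMeasure ℝ => (μ : Measure ℝ)) he
  · have hl : Tendsto (fun k => ENNReal.ofReal (a (φ k)).1) atTop (𝓝 (ENNReal.ofReal a₀.1)) :=
      (ENNReal.continuous_ofReal.tendsto _).comp (h1.comp hφ.tendsto_atTop)
    refine (lintegral_le_liminf_lintegral_of_forall_isOpen_measure_le_liminf_measure
      (μs := fun k => ((π ∘ φ) k : Measure (ℝ × ℝ))) (f := fun q : ℝ × ℝ => q.2 ^ 2)
      (by fun_prop) (fun q => sq_nonneg _)
      (fun G hG => ProbabilityMeasure.le_liminf_measure_open_of_tendsto hφl hG)).trans ?_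
    rw [← hl.liminf_eq]
    exact liminf_le_liminf (Eventually.of_forall fun k => hπ2 (φ k))
  · have hl : Tendsto (fun k => ENNReal.ofReal (a (φ k)).2) atTop (𝓝 (ENNReal.ofReal a₀.2)) :=
      (ENNReal.continuous_ofReal.tendsto _).comp (h2.comp hφ.tendsto_atTop)
    have hsum : Continuous fun q : ℝ × ℝ => q.1 + q.2 := by fun_prop
    refine (mmse_le_liminf hN
      (ProbabilityMeasure.tendsto_map_of_tendsto_of_continuous _ _ hφl hsum)).trans ?_
    rw [← hl.liminf_eq]
    exact liminf_le_liminf (Eventually.of_forall fun k => hπ3 (φ k))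

/-- Every memoryless encoder and memoryless randomised decoder obeys each linear lower bound valid
on the one-shot region. -/
lemma ofReal_le_weighted_cost {Q N : ℝ≥0} (hN : 0 < N) {m α β : ℝ} (hα : 0 < α) (hβ : 0 < β)
    (hm : ∀ a ∈ oneShot Q N, m ≤ α * a.1 + β * a.2)
    (π : Measure (ℝ × ℝ)) [IsProbabilityMeasure π] (hπ : π.fst = gaussianReal 0 Q)
    {W : Type*} [MeasurableSpace W] (κ : Kernel ℝ W) [IsMarkovKernel κ] (G : ℝ → W → ℝ)
    (hG : Measurable (Function.uncurry G)) :
    ENNReal.ofReal m ≤ ENNReal.ofReal α * ∫⁻ q, ENNReal.ofReal (q.2 ^ 2) ∂π +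
      ENNReal.ofReal β * ∫⁻ q, ∫⁻ z, ∫⁻ w, ENNReal.ofReal
        ((q.1 + q.2 - G (q.1 + q.2 + z) w) ^ 2) ∂κ (q.1 + q.2 + z) ∂gaussianReal 0 N ∂π := by
  set p := ∫⁻ q, ENNReal.ofReal (q.2 ^ 2) ∂π with hp
  set s := ∫⁻ q, ∫⁻ z, ∫⁻ w, ENNReal.ofReal
        ((q.1 + q.2 - G (q.1 + q.2 + z) w) ^ 2) ∂κ (q.1 + q.2 + z) ∂gaussianReal 0 N ∂π with hs
  have hα' : ENNReal.ofReal α ≠ 0 := (ENNReal.ofReal_pos.2 hα).ne'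
  have hβ' : ENNReal.ofReal β ≠ 0 := (ENNReal.ofReal_pos.2 hβ).ne'
  by_cases hpt : p = ∞
  · simp [hpt, ENNReal.mul_top hα']
  by_cases hst : s = ∞
  · simp [hst, ENNReal.mul_top hβ']
  have hsum : Measurable fun q : ℝ × ℝ => q.1 + q.2 := by fun_prop
  have : IsProbabilityMeasure (π.map fun q => q.1 + q.2) :=
    Measure.isProbabilityMeasure_map hsum.aemeasurable
  have hms : mmse N (π.map fun q => q.1 + q.2) ≤ s := by
    refine (mmse_le_lintegral hN _ κ G hG).trans_eq ?_
    have hm3 : Measurable fun q : (ℝ × ℝ) × W =>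
        ENNReal.ofReal ((q.1.1 - G (q.1.1 + q.1.2) q.2) ^ 2) := by
      have : Measurable fun q : (ℝ × ℝ) × W => G (q.1.1 + q.1.2) q.2 :=
        hG.comp (((measurable_fst.comp measurable_fst).add
          (measurable_snd.comp measurable_fst)).prodMk measurable_snd)
      fun_prop
    have hm2 : Measurable fun r : ℝ × ℝ =>
        ∫⁻ w, ENNReal.ofReal ((r.1 - G (r.1 + r.2) w) ^ 2) ∂κ (r.1 + r.2) :=
      Measurable.lintegral_kernel_prod_right' (κ := κ.comap (fun r : ℝ × ℝ => r.1 + r.2) hsum) hm3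
    rw [lintegral_map (hm2.lintegral_prod_right' (ν := gaussianReal 0 N)) hsum]
  have hmem : ((p.toReal, s.toReal) : ℝ × ℝ) ∈ oneShot Q N := by
    refine ⟨⟨ENNReal.toReal_nonneg, ENNReal.toReal_nonneg⟩, ⟨π, inferInstance⟩, hπ, ?_, ?_⟩
    · rw [ENNReal.ofReal_toReal hpt]; exact le_rfl
    · rw [ENNReal.ofReal_toReal hst]; exact hms
  calc ENNReal.ofReal m ≤ ENNReal.ofReal (α * p.toReal + β * s.toReal) :=
        ENNReal.ofReal_le_ofReal (hm _ hmem)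
    _ = _ := by
        rw [ENNReal.ofReal_add (by positivity) (by positivity), ENNReal.ofReal_mul hα.le,
          ENNReal.ofReal_mul hβ.le, ENNReal.ofReal_toReal hpt, ENNReal.ofReal_toReal hst]

lemma continuous_cdf (μ : Measure ℝ) [IsProbabilityMeasure μ] [NullSingletonClass μ] :
    Continuous (cdf μ) := by
  refine continuous_iff_continuousAt.2 fun a => ?_
  refine continuousAt_iff_continuous_left'_right'.2
    ⟨?_, ((cdf μ).right_continuous a).mono Set.Ioi_subset_Ici_self⟩
  have h := (cdf μ).measure_singleton a
  rw [measure_cdf, measure_singleton, eq_comm, ENNReal.ofReal_eq_zero, sub_nonpos] at h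
  refine (monotone_cdf μ).continuousWithinAt_Iio_iff_leftLim_eq.2 ?_
  exact ((monotone_cdf μ).leftLim_le le_rfl).antisymm h

lemma mem_range_cdf (μ : Measure ℝ) [IsProbabilityMeasure μ] [NullSingletonClass μ] {c : ℝ}
    (h0 : 0 < c) (h1 : c < 1) : c ∈ Set.range (cdf μ) := by
  obtain ⟨a, ha⟩ := ((tendsto_cdf_atBot μ).eventually_lt_const h0).exists
  obtain ⟨b, hb⟩ := ((tendsto_cdf_atTop μ).eventually_const_lt h1).exists
  exact mem_range_of_exists_le_of_exists_ge (continuous_cdf μ) ⟨a, ha.le⟩ ⟨b, hb.le⟩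

/-- The probability integral transform: an atomless law on the line is pushed to the uniform law
by its distribution function. -/
lemma exists_measurable_map_eq_volume_unitInterval (μ : Measure ℝ) [IsProbabilityMeasure μ]
    [NullSingletonClass μ] : ∃ h : ℝ → unitInterval, Measurable h ∧ μ.map h = volume := by
  have hmeas : Measurable fun x => (⟨cdf μ x, cdf_nonneg μ x, cdf_le_one μ x⟩ : unitInterval) :=
    (continuous_cdf μ).measurable.subtype_mk
  refine ⟨_, hmeas, ?_⟩
  have := Measure.isProbabilityMeasure_map (μ := μ) hmeas.aemeasurable
  refine Measure.ext_of_Iic _ _ fun c => ?_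
  rw [Measure.map_apply hmeas measurableSet_Iic, unitInterval.volume_Iic]
  have hset : (fun x => (⟨cdf μ x, cdf_nonneg μ x, cdf_le_one μ x⟩ : unitInterval)) ⁻¹' Set.Iic c
      = {x | cdf μ x ≤ c} := rfl
  rw [hset]
  rcases c.2.2.eq_or_lt with h1 | h1
  · rw [h1]
    simp [cdf_le_one]
  refine le_antisymm ?_ ?_
  · refine ENNReal.le_of_forall_pos_le_add fun ε hε _ => ?_
    obtain ⟨d, hd, hd1⟩ : ∃ d : ℝ, (c : ℝ) < d ∧ d < min 1 ((c : ℝ) + ε) :=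
      exists_between (lt_min h1 (by simpa using hε))
    obtain ⟨x, hx⟩ := mem_range_cdf μ (c.2.1.trans_lt hd) (hd1.trans_le (min_le_left _ _))
    calc μ {x | cdf μ x ≤ c} ≤ μ (Set.Iic x) := measure_mono fun y hy => by
          by_contra hxy
          have := monotone_cdf μ (not_le.1 hxy).le
          have hy' : cdf μ y ≤ c := hy
          linarith
      _ = ENNReal.ofReal d := by rw [← ofReal_cdf, hx]
      _ ≤ ENNReal.ofReal ((c : ℝ) + ε) := ENNReal.ofReal_le_ofReal (hd1.le.trans (min_le_right _ _))
      _ = _ := by rw [ENNReal.ofReal_add c.2.1 (NNReal.coe_nonneg ε), ENNReal.ofReal_coe_nnreal]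
  · rcases c.2.1.eq_or_lt with h0 | h0
    · simp [← h0]
    obtain ⟨x, hx⟩ := mem_range_cdf μ h0 h1
    rw [← hx, ofReal_cdf]
    exact measure_mono fun y hy => monotone_cdf μ hy

/-- Every law on the plane is realised by a measurable function of its first coordinate and an
independent standard Gaussian seed. -/
lemma exists_seeded_map_eq (π : Measure (ℝ × ℝ)) [IsProbabilityMeasure π] :
    ∃ f : ℝ → ℝ → ℝ, Measurable (Function.uncurry f) ∧
      ∀ F : ℝ × ℝ → ℝ≥0∞, Measurable F →
        ∫⁻ x, ∫⁻ v, F (x, f x v) ∂gaussianReal 0 1 ∂π.fst = ∫⁻ q, F q ∂π := by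
  have : NullSingletonClass (gaussianReal 0 1) := nullSingletonClass_gaussianReal one_ne_zero
  obtain ⟨h, hh, hmap⟩ := exists_measurable_map_eq_volume_unitInterval (gaussianReal 0 1)
  obtain ⟨f, hf, hfmap⟩ := Kernel.exists_measurable_map_eq_unitInterval π.condKernel
  refine ⟨fun x v => f x (h v), hf.comp (measurable_fst.prodMk (hh.comp measurable_snd)),
    fun F hF => ?_⟩
  conv_rhs => rw [← π.disintegrate π.condKernel, Measure.lintegral_compProd hF]
  refine lintegral_congr fun x => ?_
  rw [← hfmap x, ← hmap, lintegral_map (by fun_prop) (by fun_prop), lintegral_map (by fun_prop) hh]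

lemma lintegral_sub_mul_sq_gaussian (r δ : ℝ) :
    ∫⁻ w, ENNReal.ofReal ((r - δ * w) ^ 2) ∂gaussianReal 0 1 =
      ENNReal.ofReal (r ^ 2) + ENNReal.ofReal (δ ^ 2) := by
  have hid : MemLp id 2 (gaussianReal 0 1) := memLp_id_gaussianReal 2
  have h1 : Integrable (fun w : ℝ => w) (gaussianReal 0 1) := hid.integrable (by norm_num)
  have h2 : Integrable (fun w : ℝ => w ^ 2) (gaussianReal 0 1) := hid.integrable_sq
  have hv : ∫ w, w ^ 2 ∂gaussianReal 0 1 = 1 := by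
    have := variance_of_integral_eq_zero (X := fun w : ℝ => w) (μ := gaussianReal 0 1)
      (by fun_prop) (by simp)
    rw [variance_fun_id_gaussianReal] at this
    simpa using this.symm
  have h12 : Integrable (fun w : ℝ => -(2 * r * δ) * w + δ ^ 2 * w ^ 2) (gaussianReal 0 1) :=
    (h1.const_mul _).add (h2.const_mul _)
  have heq : (fun w : ℝ => (r - δ * w) ^ 2) =
      fun w => r ^ 2 + (-(2 * r * δ) * w + δ ^ 2 * w ^ 2) := by
    funext w; ring
  rw [← ofReal_integral_eq_lintegral_ofReal ?_ (Filter.Eventually.of_forall fun w => sq_nonneg _),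
    heq, integral_add (integrable_const _) h12,
    integral_add (h1.const_mul _) (h2.const_mul _), integral_const_mul, integral_const_mul, hv,
    ← ENNReal.ofReal_add (sq_nonneg _) (sq_nonneg _)]
  · simp
  · rw [heq]
    exact (integrable_const _).add h12

/-- The shift `c` for which `E[(U + c)²]` attains a prescribed value above `E[U²]`. -/
lemma exists_lintegral_add_const_sq_eq {π : Measure (ℝ × ℝ)} [IsProbabilityMeasure π] {p : ℝ}
    (hp : 0 ≤ p) (h : ∫⁻ q, ENNReal.ofReal (q.2 ^ 2) ∂π ≤ ENNReal.ofReal p) :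
    ∃ c : ℝ, ∫⁻ q, ENNReal.ofReal ((q.2 + c) ^ 2) ∂π = ENNReal.ofReal p := by
  have hi2 : Integrable (fun q : ℝ × ℝ => q.2 ^ 2) π := by
    refine (lintegral_ofReal_ne_top_iff_integrable (by fun_prop)
      (Filter.Eventually.of_forall fun q => sq_nonneg _)).1 (ne_top_of_le_ne_top ?_ h)
    exact ENNReal.ofReal_ne_top
  have hi1 : Integrable (fun q : ℝ × ℝ => q.2) π :=
    ((memLp_two_iff_integrable_sq (by fun_prop)).2 hi2).integrable (by norm_num)
  set m := ∫ q, q.2 ∂π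
  set s := ∫ q, q.2 ^ 2 ∂π with hs
  have hsp : s ≤ p := by
    rw [← ofReal_integral_eq_lintegral_ofReal hi2
      (Filter.Eventually.of_forall fun q => sq_nonneg _)] at h
    exact (ENNReal.ofReal_le_ofReal_iff hp).1 h
  refine ⟨-m + √(m ^ 2 + (p - s)), ?_⟩
  set c := -m + √(m ^ 2 + (p - s)) with hc
  have heq : (fun q : ℝ × ℝ => (q.2 + c) ^ 2) = fun q => q.2 ^ 2 + (2 * c * q.2 + c ^ 2) := by
    funext q; ring
  rw [← ofReal_integral_eq_lintegral_ofReal ?_ (Filter.Eventually.of_forall fun w => sq_nonneg _),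
    heq, integral_add (by fun_prop) (by fun_prop), integral_add (by fun_prop) (by fun_prop),
    integral_const_mul]
  · have hsq : √(m ^ 2 + (p - s)) ^ 2 = m ^ 2 + (p - s) := Real.sq_sqrt (by nlinarith)
    congr 1
    simp only [integral_const, probReal_univ, one_smul]
    change s + (2 * c * m + c ^ 2) = p
    rw [hc]
    linear_combination hsq
  · rw [heq]; fun_prop

/-- Each one-shot cost pair is attained exactly by a seeded memoryless policy. -/
lemma exists_policy_of_mem_oneShot {Q N : ℝ≥0} (hN : 0 < N) {a : ℝ × ℝ} (ha : a ∈ oneShot Q N) :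
    ∃ f g : ℝ → ℝ → ℝ, Measurable (Function.uncurry f) ∧ Measurable (Function.uncurry g) ∧
      ∫⁻ x, ∫⁻ v, ENNReal.ofReal (f x v ^ 2) ∂gaussianReal 0 1 ∂gaussianReal 0 Q =
        ENNReal.ofReal a.1 ∧
      ∫⁻ x, ∫⁻ v, ∫⁻ z, ∫⁻ w, ENNReal.ofReal ((x + f x v - g (x + f x v + z) w) ^ 2)
        ∂gaussianReal 0 1 ∂gaussianReal 0 N ∂gaussianReal 0 1 ∂gaussianReal 0 Q =
        ENNReal.ofReal a.2 := by
  obtain ⟨ha0, π, hfst, hP, hS⟩ := ha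
  obtain ⟨f, hf, hfπ⟩ := exists_seeded_map_eq (π : Measure (ℝ × ℝ))
  obtain ⟨c, hc⟩ := exists_lintegral_add_const_sq_eq ha0.1 hP
  have hsum : Measurable fun q : ℝ × ℝ => q.1 + q.2 := by fun_prop
  set ν := (π : Measure (ℝ × ℝ)).map fun q => q.1 + q.2 with hν
  have : IsProbabilityMeasure ν := Measure.isProbabilityMeasure_map hsum.aemeasurable
  have hb := measurable_bayesDec N ν
  set δ := √(a.2 - (mmse N ν).toReal) with hδ
  have hSt : mmse N ν ≠ ∞ := ne_top_of_le_ne_top ENNReal.ofReal_ne_top hS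
  have hδ2 : δ ^ 2 = a.2 - (mmse N ν).toReal :=
    Real.sq_sqrt (sub_nonneg.2 (ENNReal.toReal_le_of_le_ofReal ha0.2 hS))
  refine ⟨fun x v => f x v + c, fun y w => bayesDec N ν (y - c) + c + δ * w, hf.add_const c,
    ?_, ?_, ?_⟩
  · have : Measurable fun p : ℝ × ℝ => bayesDec N ν (p.1 - c) + c + δ * p.2 := by fun_prop
    exact this
  · rw [← hfst, hfπ (fun q => ENNReal.ofReal ((q.2 + c) ^ 2)) (by fun_prop), hc]
  · have hkey : ∀ x v z : ℝ, ∫⁻ w, ENNReal.ofReal ((x + (f x v + c) -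
        (bayesDec N ν (x + (f x v + c) + z - c) + c + δ * w)) ^ 2) ∂gaussianReal 0 1 =
        ENNReal.ofReal ((x + f x v - bayesDec N ν (x + f x v + z)) ^ 2) +
          ENNReal.ofReal (δ ^ 2) := fun x v z => by
      rw [← lintegral_sub_mul_sq_gaussian]
      refine lintegral_congr fun w => ?_
      rw [show x + (f x v + c) + z - c = x + f x v + z by ring]
      congr 2
      ring
    have hm : Measurable fun p : ℝ × ℝ =>
        ENNReal.ofReal ((p.1 - bayesDec N ν (p.1 + p.2)) ^ 2) := by
      fun_prop
    have hm' : Measurable fun x : ℝ =>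
        ∫⁻ z, ENNReal.ofReal ((x - bayesDec N ν (x + z)) ^ 2) ∂gaussianReal 0 N :=
      hm.lintegral_prod_right' (ν := gaussianReal 0 N)
    simp_rw [hkey]
    rw [← hfst, hfπ (fun q => ∫⁻ z, (ENNReal.ofReal ((q.1 + q.2 -
      bayesDec N ν (q.1 + q.2 + z)) ^ 2) + ENNReal.ofReal (δ ^ 2)) ∂gaussianReal 0 N)]
    · simp_rw [lintegral_add_right _ measurable_const]
      simp only [lintegral_const, measure_univ, mul_one]
      rw [← lintegral_map hm' hsum, lintegral_bayesDec_eq_mmse hN]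
      nth_rw 1 [← ENNReal.ofReal_toReal hSt]
      rw [← ENNReal.ofReal_add ENNReal.toReal_nonneg (sq_nonneg _), hδ2, add_sub_cancel]
    · refine Measurable.lintegral_prod_right' (ν := gaussianReal 0 N)
        (f := fun p : (ℝ × ℝ) × ℝ => ENNReal.ofReal ((p.1.1 + p.1.2 -
          bayesDec N ν (p.1.1 + p.1.2 + p.2)) ^ 2) + ENNReal.ofReal (δ ^ 2)) ?_
      fun_prop

namespace SLDecomp

variable {Q N : ℝ≥0} {T : Type} [MeasurableSpace T]

lemma measurable_lintegral_channel (d : SLDecomp Q N T) {H : Space T → ℝ≥0∞} (hH : Measurable H) :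
    Measurable fun r : (ℝ × T) × ℝ =>
      ∫⁻ z, ∫⁻ w, H ((r, z), w) ∂d.κ2 (r.1.2, r.1.1 + r.2 + z) ∂gaussianReal 0 N := by
  have h := hH.lintegral_kernel_prod_right'
    (κ := d.κ2.comap (fun q : ((ℝ × T) × ℝ) × ℝ => (q.1.1.2, q.1.1.1 + q.1.2 + q.2))
      (by fun_prop))
  exact h.lintegral_prod_right' (ν := gaussianReal 0 N)

lemma measurable_lintegral_slice (d : SLDecomp Q N T) {H : Space T → ℝ≥0∞} (hH : Measurable H) :
    Measurable fun t : T => ∫⁻ x, ∫⁻ u, ∫⁻ z, ∫⁻ w, H ((((x, t), u), z), w)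
      ∂d.κ2 (t, x + u + z) ∂gaussianReal 0 N ∂d.κ1 (x, t) ∂gaussianReal 0 Q := by
  have h := (d.measurable_lintegral_channel hH).lintegral_kernel_prod_right' (κ := d.κ1)
  exact h.lintegral_prod_left' (μ := gaussianReal 0 Q)

/-- Integration against the joint law, sliced along the time-sharing variable. -/
lemma lintegral_measure (d : SLDecomp Q N T) {H : Space T → ℝ≥0∞} (hH : Measurable H) :
    ∫⁻ q, H q ∂d.measure = ∫⁻ t, ∫⁻ x, ∫⁻ u, ∫⁻ z, ∫⁻ w, H ((((x, t), u), z), w)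
      ∂d.κ2 (t, x + u + z) ∂gaussianReal 0 N ∂d.κ1 (x, t) ∂gaussianReal 0 Q ∂d.μT := by
  have h3 := d.measurable_lintegral_channel hH
  have h4 := h3.lintegral_kernel_prod_right' (κ := d.κ1)
  rw [measure, Measure.lintegral_compProd hH,
    lintegral_prod _ hH.lintegral_kernel_prod_right'.aemeasurable]
  simp only [Kernel.comap_apply]
  rw [Measure.lintegral_compProd h3, lintegral_prod_symm _ h4.aemeasurable]

/-- The costs of a single-letter decomposition lie in the time-sharing hull. -/
lemma mem_chordHull_of_realizes (hN : 0 < N) {d : SLDecomp Q N T} {P S : ℝ}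
    (h : d.realizes P S) : (P, S) ∈ chordHull (oneShot Q N) := by
  obtain ⟨hiP, hiS, hP, hS⟩ := h
  refine mem_chordHull_of_forall_le (isClosed_oneShot Q hN) (isUpperSet_oneShot Q N)
    nonneg_of_mem_oneShot fun α β hα hβ m hm => ?_
  have hP0 : 0 ≤ P := hP ▸ integral_nonneg fun q => sq_nonneg _
  have hS0 : 0 ≤ S := hS ▸ integral_nonneg fun q => sq_nonneg _
  have hmP : Measurable fun q : Space T => ENNReal.ofReal (sU1 q ^ 2) := by
    unfold sU1; fun_prop
  have hmS : Measurable fun q : Space T => ENNReal.ofReal ((sX1 q - sU2 q) ^ 2) := by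
    unfold sX1 sX0 sU1 sU2; fun_prop
  have hPl : ENNReal.ofReal P = ∫⁻ q, ENNReal.ofReal (sU1 q ^ 2) ∂d.measure := by
    rw [hP, ofReal_integral_eq_lintegral_ofReal hiP (ae_of_all _ fun q => sq_nonneg _)]
  have hSl : ENNReal.ofReal S = ∫⁻ q, ENNReal.ofReal ((sX1 q - sU2 q) ^ 2) ∂d.measure := by
    rw [hS, ofReal_integral_eq_lintegral_ofReal hiS (ae_of_all _ fun q => sq_nonneg _)]
  rw [d.lintegral_measure hmP] at hPl
  rw [d.lintegral_measure hmS] at hSl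
  refine (ENNReal.ofReal_le_ofReal_iff (by positivity)).1 ?_
  rw [ENNReal.ofReal_add (by positivity) (by positivity), ENNReal.ofReal_mul hα.le,
    ENNReal.ofReal_mul hβ.le, hPl, hSl,
    ← lintegral_const_mul _ (d.measurable_lintegral_slice hmP),
    ← lintegral_const_mul _ (d.measurable_lintegral_slice hmS),
    ← lintegral_add_left ((d.measurable_lintegral_slice hmP).const_mul _)]
  have hslice : ∀ t, ENNReal.ofReal m ≤ _ := fun t =>
    ofReal_le_weighted_cost hN hα hβ hm
      (gaussianReal 0 Q ⊗ₘ d.κ1.comap (fun x => (x, t)) (by fun_prop))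
      (Measure.fst_compProd _ _) (d.κ2.comap (fun y => (t, y)) (by fun_prop)) (fun _ w => w)
      measurable_snd
  calc ENNReal.ofReal m = ∫⁻ _, ENNReal.ofReal m ∂d.μT := by simp
    _ ≤ _ := lintegral_mono fun t => (hslice t).trans_eq ?_
  rw [Measure.lintegral_compProd (by fun_prop), Measure.lintegral_compProd]
  · simp only [Kernel.comap_apply, sU1, sX1, sX0, sU2, lintegral_const, measure_univ, mul_one]
  · exact (d.measurable_lintegral_channel hmS).comp
      (f := fun q : ℝ × ℝ => ((q.1, t), q.2)) (by fun_prop)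

end SLDecomp

lemma integrable_and_eq_integral_of_lintegral_ofReal_eq {Ω : Type*} [MeasurableSpace Ω]
    {μ : Measure Ω} {F : Ω → ℝ} (hF : Measurable F) (h0 : ∀ ω, 0 ≤ F ω) {p : ℝ} (hp : 0 ≤ p)
    (h : ∫⁻ ω, ENNReal.ofReal (F ω) ∂μ = ENNReal.ofReal p) :
    Integrable F μ ∧ p = ∫ ω, F ω ∂μ := by
  have hi : Integrable F μ := (lintegral_ofReal_ne_top_iff_integrable hF.aestronglyMeasurable
    (ae_of_all _ h0)).1 (h ▸ ENNReal.ofReal_ne_top)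
  refine ⟨hi, ?_⟩
  rw [integral_eq_lintegral_of_nonneg_ae (ae_of_all _ h0) hF.aestronglyMeasurable, h,
    ENNReal.toReal_ofReal hp]

/-- Every point of the time-sharing hull is realised with a binary time-sharing variable. -/
lemma exists_realizes_of_mem_chordHull {Q N : ℝ≥0} (hN : 0 < N) {P S : ℝ}
    (h : (P, S) ∈ chordHull (oneShot Q N)) : ∃ d : SLDecomp Q N Bool, d.realizes P S := by
  obtain ⟨a, ha, b, hb, r, ⟨hr0, hr1⟩, hx⟩ := h
  obtain ⟨f, g, hf, hg, hfa, hga⟩ := exists_policy_of_mem_oneShot hN ha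
  obtain ⟨f', g', hf', hg', hfb, hgb⟩ := exists_policy_of_mem_oneShot hN hb
  have ha0 := nonneg_of_mem_oneShot a ha
  have hb0 := nonneg_of_mem_oneShot b hb
  have h1r : 0 ≤ 1 - r := sub_nonneg.2 hr1
  have hP : P = r * a.1 + (1 - r) * b.1 := by simpa using congrArg Prod.fst hx
  have hS : S = r * a.2 + (1 - r) * b.2 := by simpa using congrArg Prod.snd hx
  let φ : (ℝ × Bool) × ℝ → ℝ := fun p => if p.1.2 = true then f p.1.1 p.2 else f' p.1.1 p.2
  let ψ : (Bool × ℝ) × ℝ → ℝ := fun p => if p.1.1 = true then g p.1.2 p.2 else g' p.1.2 p.2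
  have hφ : Measurable φ := by
    refine Measurable.ite (measurableSet_eq_fun (by fun_prop) (by fun_prop)) ?_ ?_
    · exact hf.comp (f := fun p : (ℝ × Bool) × ℝ => (p.1.1, p.2)) (by fun_prop)
    · exact hf'.comp (f := fun p : (ℝ × Bool) × ℝ => (p.1.1, p.2)) (by fun_prop)
  have hψ : Measurable ψ := by
    refine Measurable.ite (measurableSet_eq_fun (by fun_prop) (by fun_prop)) ?_ ?_
    · exact hg.comp (f := fun p : (Bool × ℝ) × ℝ => (p.1.2, p.2)) (by fun_prop)
    · exact hg'.comp (f := fun p : (Bool × ℝ) × ℝ => (p.1.2, p.2)) (by fun_prop)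
  obtain ⟨d, hμT, hκ1, hκ2⟩ : ∃ d : SLDecomp Q N Bool,
      (∀ F : Bool → ℝ≥0∞, ∫⁻ t, F t ∂d.μT =
        ENNReal.ofReal r * F true + ENNReal.ofReal (1 - r) * F false) ∧
      (∀ (p : ℝ × Bool) (F : ℝ → ℝ≥0∞), Measurable F →
        ∫⁻ u, F u ∂d.κ1 p = ∫⁻ v, F (φ (p, v)) ∂gaussianReal 0 1) ∧
      (∀ (p : Bool × ℝ) (F : ℝ → ℝ≥0∞), Measurable F →
        ∫⁻ u, F u ∂d.κ2 p = ∫⁻ v, F (ψ (p, v)) ∂gaussianReal 0 1) := by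
    refine ⟨{ μT := ENNReal.ofReal r • Measure.dirac true +
                ENNReal.ofReal (1 - r) • Measure.dirac false
              probT := ⟨by simp [← ENNReal.ofReal_add hr0 h1r]⟩
              κ1 := (Kernel.id ×ₖ Kernel.const _ (gaussianReal 0 1)).map φ
              markov1 := Kernel.IsMarkovKernel.map _ hφ
              κ2 := (Kernel.id ×ₖ Kernel.const _ (gaussianReal 0 1)).map ψ
              markov2 := Kernel.IsMarkovKernel.map _ hψ }, fun F => ?_, fun p F hF => ?_,
      fun p F hF => ?_⟩
    · simp [lintegral_add_measure, lintegral_smul_measure]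
    · rw [Kernel.map_apply _ hφ, lintegral_map hF hφ, Kernel.prod_apply, Kernel.id_apply,
        Kernel.const_apply, lintegral_prod _ (by fun_prop), lintegral_dirac' _ (by fun_prop)]
    · rw [Kernel.map_apply _ hψ, lintegral_map hF hψ, Kernel.prod_apply, Kernel.id_apply,
        Kernel.const_apply, lintegral_prod _ (by fun_prop), lintegral_dirac' _ (by fun_prop)]
  have hmP : Measurable fun q : SLDecomp.Space Bool => SLDecomp.sU1 q ^ 2 := by
    unfold SLDecomp.sU1; fun_prop
  have hmS : Measurable fun q : SLDecomp.Space Bool => (SLDecomp.sX1 q - SLDecomp.sU2 q) ^ 2 := by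
    unfold SLDecomp.sX1 SLDecomp.sX0 SLDecomp.sU1 SLDecomp.sU2; fun_prop
  have hlP : ∫⁻ q, ENNReal.ofReal (SLDecomp.sU1 q ^ 2) ∂d.measure = ENNReal.ofReal P := by
    rw [d.lintegral_measure hmP.ennreal_ofReal]
    simp only [SLDecomp.sU1, lintegral_const, measure_univ, mul_one]
    rw [hμT]
    simp_rw [hκ1 _ (fun u => ENNReal.ofReal (u ^ 2)) (by fun_prop)]
    simp only [φ, if_true, Bool.false_eq_true, if_false]
    rw [hfa, hfb, hP, ENNReal.ofReal_add (mul_nonneg hr0 ha0.1) (mul_nonneg h1r hb0.1),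
      ENNReal.ofReal_mul hr0, ENNReal.ofReal_mul h1r]
  have hlS : ∫⁻ q, ENNReal.ofReal ((SLDecomp.sX1 q - SLDecomp.sU2 q) ^ 2) ∂d.measure =
      ENNReal.ofReal S := by
    have hch := d.measurable_lintegral_channel hmS.ennreal_ofReal
    rw [d.lintegral_measure hmS.ennreal_ofReal, hμT]
    have hin : ∀ (t : Bool) (x : ℝ), _ = _ := fun t x => hκ1 (x, t) _
      (hch.comp (f := fun u : ℝ => ((x, t), u)) (by fun_prop))
    simp only [Function.comp_def] at hin
    simp_rw [hin]
    simp only [SLDecomp.sX1, SLDecomp.sX0, SLDecomp.sU1, SLDecomp.sU2]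
    have hin2 : ∀ (t : Bool) (y c : ℝ), _ = _ := fun t y c =>
      hκ2 (t, y) (fun u => ENNReal.ofReal ((c - u) ^ 2)) (by fun_prop)
    simp_rw [hin2]
    simp only [φ, ψ, if_true, Bool.false_eq_true, if_false]
    rw [hga, hgb, hS, ENNReal.ofReal_add (mul_nonneg hr0 ha0.2) (mul_nonneg h1r hb0.2),
      ENNReal.ofReal_mul hr0, ENNReal.ofReal_mul h1r]
  have hP0 : 0 ≤ P := hP ▸ add_nonneg (mul_nonneg hr0 ha0.1) (mul_nonneg h1r hb0.1)
  have hS0 : 0 ≤ S := hS ▸ add_nonneg (mul_nonneg hr0 ha0.2) (mul_nonneg h1r hb0.2)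
  obtain ⟨hi1, he1⟩ := integrable_and_eq_integral_of_lintegral_ofReal_eq hmP
    (fun q => sq_nonneg _) hP0 hlP
  obtain ⟨hi2, he2⟩ := integrable_and_eq_integral_of_lintegral_ofReal_eq hmS
    (fun q => sq_nonneg _) hS0 hlS
  exact ⟨d, hi1, hi2, he1, he2⟩

/-- The law of one letter of base randomness: source, noise, encoder seed and decoder seed. -/
def letterLaw (Q N : ℝ≥0) : Measure (ℝ × ℝ × ℝ × ℝ) :=
  (gaussianReal 0 Q).prod ((gaussianReal 0 N).prod ((gaussianReal 0 1).prod (gaussianReal 0 1)))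

instance (Q N : ℝ≥0) : IsProbabilityMeasure (letterLaw Q N) := by
  unfold letterLaw; infer_instance

/-- The block sample assembled from its letters. -/
def sampleOfLetters {n : ℕ} (q : Fin n → ℝ × ℝ × ℝ × ℝ) : Sample n :=
  (fun t => (q t).1, fun t => (q t).2.1, fun t => (q t).2.2.1, fun t => (q t).2.2.2)

lemma measurePreserving_sampleOfLetters (n : ℕ) (Q N : ℝ≥0) :
    MeasurePreserving (sampleOfLetters (n := n)) (Measure.pi fun _ => letterLaw Q N)
      (base n Q N) := by
  have h3 := measurePreserving_arrowProdEquivProdArrow ℝ ℝ (Fin n)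
    (fun _ => gaussianReal 0 1) (fun _ => gaussianReal 0 1)
  have h2 := measurePreserving_arrowProdEquivProdArrow ℝ (ℝ × ℝ) (Fin n)
    (fun _ => gaussianReal 0 N) (fun _ => (gaussianReal 0 1).prod (gaussianReal 0 1))
  have h1 := measurePreserving_arrowProdEquivProdArrow ℝ (ℝ × ℝ × ℝ) (Fin n)
    (fun _ => gaussianReal 0 Q)
    (fun _ => (gaussianReal 0 N).prod ((gaussianReal 0 1).prod (gaussianReal 0 1)))
  exact ((MeasurePreserving.id _).prod (((MeasurePreserving.id _).prod h3).comp h2)).comp h1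

lemma lintegral_letterLaw (Q N : ℝ≥0) {F : ℝ × ℝ × ℝ × ℝ → ℝ≥0∞} (hF : Measurable F) :
    ∫⁻ q, F q ∂letterLaw Q N = ∫⁻ x, ∫⁻ v, ∫⁻ z, ∫⁻ w, F (x, z, v, w)
      ∂gaussianReal 0 1 ∂gaussianReal 0 N ∂gaussianReal 0 1 ∂gaussianReal 0 Q := by
  rw [letterLaw, lintegral_prod _ hF.aemeasurable]
  refine lintegral_congr fun x => ?_
  rw [lintegral_prod _ (by fun_prop)]
  have h : ∀ z, ∫⁻ y, F (x, z, y) ∂(gaussianReal 0 1).prod (gaussianReal 0 1) =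
      ∫⁻ v, ∫⁻ w, F (x, z, v, w) ∂gaussianReal 0 1 ∂gaussianReal 0 1 := fun z =>
    lintegral_prod _ (by fun_prop)
  simp_rw [h]
  refine lintegral_lintegral_swap (Measurable.aemeasurable ?_)
  exact Measurable.lintegral_prod_right' (ν := gaussianReal 0 1)
    (f := fun p : (ℝ × ℝ) × ℝ => F (x, p.1.1, p.1.2, p.2)) (by fun_prop)

/-- The cost of a seeded memoryless policy obeys each linear lower bound valid on the one-shot
region. -/
lemma ofReal_le_policy_cost {Q N : ℝ≥0} (hN : 0 < N) {m α β : ℝ} (hα : 0 < α) (hβ : 0 < β)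
    (hm : ∀ a ∈ oneShot Q N, m ≤ α * a.1 + β * a.2) {f g : ℝ → ℝ → ℝ}
    (hf : Measurable (Function.uncurry f)) (hg : Measurable (Function.uncurry g)) :
    ENNReal.ofReal m ≤ ∫⁻ q, ENNReal.ofReal (α * f q.1 q.2.2.1 ^ 2 +
      β * (q.1 + f q.1 q.2.2.1 - g (q.1 + f q.1 q.2.2.1 + q.2.1) q.2.2.2) ^ 2)
        ∂letterLaw Q N := by
  have hf' : Measurable fun q : ℝ × ℝ × ℝ × ℝ => f q.1 q.2.2.1 :=
    hf.comp (f := fun q : ℝ × ℝ × ℝ × ℝ => (q.1, q.2.2.1)) (by fun_prop)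
  have hg' : Measurable fun q : ℝ × ℝ × ℝ × ℝ =>
      g (q.1 + f q.1 q.2.2.1 + q.2.1) q.2.2.2 :=
    hg.comp (f := fun q : ℝ × ℝ × ℝ × ℝ => (q.1 + f q.1 q.2.2.1 + q.2.1, q.2.2.2)) (by fun_prop)
  have hφ : Measurable fun p : ℝ × ℝ => (p.1, f p.1 p.2) := measurable_fst.prodMk hf
  set π := ((gaussianReal 0 Q).prod (gaussianReal 0 1)).map fun p : ℝ × ℝ => (p.1, f p.1 p.2)
    with hπ
  have : IsProbabilityMeasure π := Measure.isProbabilityMeasure_map hφ.aemeasurable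
  have hfst : π.fst = gaussianReal 0 Q := by
    rw [Measure.fst, hπ, Measure.map_map measurable_fst hφ]
    exact measurePreserving_fst.map_eq
  refine (ofReal_le_weighted_cost hN hα hβ hm π hfst (Kernel.const ℝ (gaussianReal 0 1)) g
    hg).trans_eq ?_
  simp_rw [fun a b : ℝ => ENNReal.ofReal_add (mul_nonneg hα.le (sq_nonneg a))
    (mul_nonneg hβ.le (sq_nonneg b)), ENNReal.ofReal_mul hα.le, ENNReal.ofReal_mul hβ.le]
  rw [lintegral_add_left (by fun_prop), lintegral_const_mul _ (by fun_prop),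
    lintegral_const_mul _ (by fun_prop), lintegral_letterLaw Q N (by fun_prop),
    lintegral_letterLaw Q N (by fun_prop)]
  simp only [Kernel.const_apply, lintegral_const, measure_univ, mul_one]
  have hmS : Measurable fun q : ℝ × ℝ => ∫⁻ z, ∫⁻ w, ENNReal.ofReal
      ((q.1 + q.2 - g (q.1 + q.2 + z) w) ^ 2) ∂gaussianReal 0 1 ∂gaussianReal 0 N := by
    have hg'' : Measurable fun p : ((ℝ × ℝ) × ℝ) × ℝ => g (p.1.1.1 + p.1.1.2 + p.1.2) p.2 :=
      hg.comp (f := fun p : ((ℝ × ℝ) × ℝ) × ℝ => (p.1.1.1 + p.1.1.2 + p.1.2, p.2)) (by fun_prop)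
    have h : Measurable fun p : ((ℝ × ℝ) × ℝ) × ℝ => ENNReal.ofReal
        ((p.1.1.1 + p.1.1.2 - g (p.1.1.1 + p.1.1.2 + p.1.2) p.2) ^ 2) := by fun_prop
    exact (h.lintegral_prod_right' (ν := gaussianReal 0 1)).lintegral_prod_right'
      (ν := gaussianReal 0 N)
  rw [hπ, lintegral_map (by fun_prop) hφ, lintegral_map hmS hφ,
    lintegral_prod _ (Measurable.aemeasurable (by fun_prop)),
    lintegral_prod (fun p : ℝ × ℝ => ∫⁻ z, ∫⁻ w, ENNReal.ofReal
      ((p.1 + f p.1 p.2 - g (p.1 + f p.1 p.2 + z) w) ^ 2) ∂gaussianReal 0 1 ∂gaussianReal 0 N)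
      (hmS.comp hφ).aemeasurable]

/-- Resampling one coordinate of a product probability measure. -/
lemma lintegral_pi_eq_lintegral_update {ι : Type*} [Fintype ι] [DecidableEq ι] {X : ι → Type*}
    [∀ i, MeasurableSpace (X i)] (μ : ∀ i, Measure (X i)) [∀ i, IsProbabilityMeasure (μ i)]
    (i : ι) {F : (∀ i, X i) → ℝ≥0∞} (hF : Measurable F) :
    ∫⁻ ω, F ω ∂Measure.pi μ =
      ∫⁻ ω, ∫⁻ q, F (Function.update ω i q) ∂μ i ∂Measure.pi μ := by
  have hG : Measurable fun ω => ∫⁻ q, F (Function.update ω i q) ∂μ i := by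
    rw [← lmarginal_singleton]; exact hF.lmarginal μ
  refine lintegral_eq_of_lmarginal_eq {i} hF hG ?_
  simp only [lmarginal_singleton, Function.update_idem, lintegral_const, measure_univ, mul_one]

namespace Design

variable {n : ℕ} (c : Design n)

lemma measurable_U1 : Measurable c.U1 := by
  refine measurable_pi_lambda _ fun t => ?_
  exact (c.enc_meas t).comp (f := fun ω : Sample n => (ω.1, ω.2.2.1 t)) (by fun_prop)

lemma measurable_X1 : Measurable c.X1 := by
  have h := c.measurable_U1
  unfold X1 srcX0
  fun_prop

lemma measurable_Y1 : Measurable c.Y1 := by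
  have h := c.measurable_X1
  unfold Y1 noiseZ
  fun_prop

lemma measurable_U2 : Measurable c.U2 := by
  refine measurable_pi_lambda _ fun t => ?_
  have h := c.measurable_Y1
  exact (c.dec_meas t).comp (f := fun ω : Sample n => (c.Y1 ω, ω.2.2.2 t)) (by fun_prop)

/-- The encoder at time `t` as a function of the current source letter and seed, the other source
letters being frozen. -/
def encAt (t : Fin n) (ω : Sample n) (x v : ℝ) : ℝ :=
  c.enc t (Function.update (srcX0 ω) t x) v

/-- The decoder at time `t` as a function of the current output letter and seed, the other output
letters being frozen. -/
def decAt (t : Fin n) (ω : Sample n) (y w : ℝ) : ℝ :=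
  c.dec t (Function.update (c.Y1 ω) t y) w

lemma measurable_encAt (t : Fin n) (ω : Sample n) :
    Measurable (Function.uncurry (c.encAt t ω)) :=
  (c.enc_meas t).comp (f := fun p : ℝ × ℝ => (Function.update (srcX0 ω) t p.1, p.2))
    (((measurable_update _).comp measurable_fst).prodMk measurable_snd)

lemma measurable_decAt (t : Fin n) (ω : Sample n) :
    Measurable (Function.uncurry (c.decAt t ω)) :=
  (c.dec_meas t).comp (f := fun p : ℝ × ℝ => (Function.update (c.Y1 ω) t p.1, p.2))
    (((measurable_update _).comp measurable_fst).prodMk measurable_snd)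

variable (t : Fin n) (ω : Fin n → ℝ × ℝ × ℝ × ℝ) (q : ℝ × ℝ × ℝ × ℝ)

lemma srcX0_update :
    srcX0 (sampleOfLetters (Function.update ω t q)) =
      Function.update (srcX0 (sampleOfLetters ω)) t q.1 := by
  funext s
  by_cases h : s = t
  · subst h; simp [srcX0, sampleOfLetters]
  · simp [srcX0, sampleOfLetters, h]

lemma U1_update :
    c.U1 (sampleOfLetters (Function.update ω t q)) t =
      c.encAt t (sampleOfLetters ω) q.1 q.2.2.1 := by
  rw [U1, srcX0_update, encAt]
  simp [seedV, sampleOfLetters]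

lemma X1_update :
    c.X1 (sampleOfLetters (Function.update ω t q)) t =
      q.1 + c.encAt t (sampleOfLetters ω) q.1 q.2.2.1 := by
  rw [X1, U1_update, srcX0_update, Function.update_self]

lemma Y1_update_of_lt {s : Fin n} (hs : s < t) :
    c.Y1 (sampleOfLetters (Function.update ω t q)) s = c.Y1 (sampleOfLetters ω) s := by
  have hne : s ≠ t := hs.ne
  have hU : c.U1 (sampleOfLetters (Function.update ω t q)) s = c.U1 (sampleOfLetters ω) s := by
    rw [U1, U1, srcX0_update]
    have hv : seedV (sampleOfLetters (Function.update ω t q)) s = seedV (sampleOfLetters ω) s := by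
      simp [seedV, sampleOfLetters, hne]
    rw [hv]
    exact c.enc_causal s _ _ _ fun r hr => Function.update_of_ne (hr.trans_lt hs).ne _ _
  rw [Y1, Y1, X1, X1, hU, srcX0_update, Function.update_of_ne hne]
  simp [noiseZ, sampleOfLetters, hne]

lemma U2_update :
    c.U2 (sampleOfLetters (Function.update ω t q)) t = c.decAt t (sampleOfLetters ω)
      (q.1 + c.encAt t (sampleOfLetters ω) q.1 q.2.2.1 + q.2.1) q.2.2.2 := by
  have hw : seedW (sampleOfLetters (Function.update ω t q)) t = q.2.2.2 := by
    simp [seedW, sampleOfLetters]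
  rw [U2, hw, decAt]
  refine c.dec_causal t _ _ _ fun s hs => ?_
  rcases hs.eq_or_lt with rfl | hs
  · rw [Y1, X1_update, Function.update_self]
    simp [noiseZ, sampleOfLetters]
  · rw [c.Y1_update_of_lt t ω q hs, Function.update_of_ne hs.ne]

/-- The weighted cost of a causal design at each time obeys each linear lower bound valid on the
one-shot region. -/
lemma ofReal_le_letter_cost {Q N : ℝ≥0} (hN : 0 < N) {m α β : ℝ} (hα : 0 < α) (hβ : 0 < β)
    (hm : ∀ a ∈ oneShot Q N, m ≤ α * a.1 + β * a.2) :
    ENNReal.ofReal m ≤ ∫⁻ ω, ENNReal.ofReal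
      (α * c.U1 ω t ^ 2 + β * (c.X1 ω t - c.U2 ω t) ^ 2) ∂base n Q N := by
  have h1 := c.measurable_U1
  have h2 := c.measurable_X1
  have h3 := c.measurable_U2
  have hmeas : Measurable fun ω => ENNReal.ofReal
      (α * c.U1 ω t ^ 2 + β * (c.X1 ω t - c.U2 ω t) ^ 2) := by fun_prop
  have hmp := measurePreserving_sampleOfLetters n Q N
  rw [← hmp.lintegral_comp hmeas,
    lintegral_pi_eq_lintegral_update (fun _ => letterLaw Q N) t (F := fun ω => ENNReal.ofReal
      (α * c.U1 (sampleOfLetters ω) t ^ 2 +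
        β * (c.X1 (sampleOfLetters ω) t - c.U2 (sampleOfLetters ω) t) ^ 2))
      (hmeas.comp hmp.measurable)]
  calc ENNReal.ofReal m
      = ∫⁻ _, ENNReal.ofReal m ∂Measure.pi fun _ : Fin n => letterLaw Q N := by simp
    _ ≤ _ := lintegral_mono fun ω => ?_
  simp only [U1_update, X1_update, U2_update]
  exact ofReal_le_policy_cost hN hα hβ hm (c.measurable_encAt t _) (c.measurable_decAt t _)

lemma ofReal_le_cost {Q N : ℝ≥0} (hN : 0 < N) {m α β : ℝ} (hα : 0 < α) (hβ : 0 < β)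
    (hm : ∀ a ∈ oneShot Q N, m ≤ α * a.1 + β * a.2) (hn : n ≠ 0) :
    ENNReal.ofReal m ≤ ∫⁻ ω, ENNReal.ofReal
      (α * costP (c.U1 ω) + β * costS (c.X1 ω) (c.U2 ω)) ∂base n Q N := by
  have h1 := c.measurable_U1
  have h2 := c.measurable_X1
  have h3 := c.measurable_U2
  have hn' : (n : ℝ) ≠ 0 := Nat.cast_ne_zero.2 hn
  have hsum : ∀ ω, (n : ℝ) * (α * costP (c.U1 ω) + β * costS (c.X1 ω) (c.U2 ω)) =
      ∑ t, (α * c.U1 ω t ^ 2 + β * (c.X1 ω t - c.U2 ω t) ^ 2) := fun ω => by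
    rw [Finset.sum_add_distrib, ← Finset.mul_sum, ← Finset.mul_sum, costP, costS]
    field_simp
  refine (ENNReal.mul_le_mul_iff_right (a := ENNReal.ofReal n) ?_ ENNReal.ofReal_ne_top).1 ?_
  · simpa using hn
  rw [← lintegral_const_mul' _ _ ENNReal.ofReal_ne_top]
  simp_rw [← ENNReal.ofReal_mul (Nat.cast_nonneg n : (0 : ℝ) ≤ n), hsum]
  have hsum' : ∀ ω, ENNReal.ofReal (∑ t, (α * c.U1 ω t ^ 2 + β * (c.X1 ω t - c.U2 ω t) ^ 2)) =
      ∑ t, ENNReal.ofReal (α * c.U1 ω t ^ 2 + β * (c.X1 ω t - c.U2 ω t) ^ 2) := fun ω =>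
    ENNReal.ofReal_sum_of_nonneg fun t _ => by positivity
  simp_rw [hsum']
  rw [lintegral_finsetSum _ fun t _ => by fun_prop]
  calc ENNReal.ofReal (n * m) = ∑ _t : Fin n, ENNReal.ofReal m := by
        rw [ENNReal.ofReal_mul (Nat.cast_nonneg n)]; simp
    _ ≤ _ := Finset.sum_le_sum fun t _ => c.ofReal_le_letter_cost t hN hα hβ hm

end Design

/-- Achievable cost pairs lie in the time-sharing hull of the one-shot region. -/
lemma mem_chordHull_of_achievable {Q N : ℝ≥0} (hN : 0 < N) {P S : ℝ} (h : achievable Q N P S) :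
    (P, S) ∈ chordHull (oneShot Q N) := by
  refine mem_chordHull_of_forall_le (isClosed_oneShot Q hN) (isUpperSet_oneShot Q N)
    nonneg_of_mem_oneShot fun α β hα hβ m hm => ?_
  change m ≤ α * P + β * S
  have hαβ : 0 < α + β := add_pos hα hβ
  have key : ∀ ε : ℝ, 0 < ε → ENNReal.ofReal m ≤ ENNReal.ofReal (α * P + β * S) +
      ENNReal.ofReal ((α + β) * ε) ∧
      ENNReal.ofReal (-(α * P + β * S)) ≤ ENNReal.ofReal ((α + β) * ε) := by
    intro ε hε
    obtain ⟨n₀, hn₀⟩ := h ε hε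
    obtain ⟨c, hc⟩ := hn₀ (n₀ + 1) (Nat.le_succ _)
    set D : Sample (n₀ + 1) → ℝ := fun ω =>
      |P - costP (c.U1 ω)| + |S - costS (c.X1 ω) (c.U2 ω)| with hD
    have hle : ∀ ω, α * costP (c.U1 ω) + β * costS (c.X1 ω) (c.U2 ω) ≤
        (α * P + β * S) + (α + β) * D ω := fun ω => by
      have h1 := neg_abs_le (P - costP (c.U1 ω))
      have h2 := neg_abs_le (S - costS (c.X1 ω) (c.U2 ω))
      have h3 := abs_nonneg (P - costP (c.U1 ω))
      have h4 := abs_nonneg (S - costS (c.X1 ω) (c.U2 ω))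
      simp only [hD]
      nlinarith [mul_nonneg hα.le h4, mul_nonneg hβ.le h3]
    have hnn : ∀ ω, 0 ≤ α * costP (c.U1 ω) + β * costS (c.X1 ω) (c.U2 ω) := fun ω => by
      unfold costP costS; positivity
    have hint : ∫⁻ ω, ENNReal.ofReal ((α + β) * D ω) ∂base (n₀ + 1) Q N ≤
        ENNReal.ofReal ((α + β) * ε) := by
      simp_rw [ENNReal.ofReal_mul hαβ.le]
      rw [lintegral_const_mul' _ _ ENNReal.ofReal_ne_top]
      gcongr
    constructor
    · calc ENNReal.ofReal m ≤ ∫⁻ ω, ENNReal.ofReal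
            (α * costP (c.U1 ω) + β * costS (c.X1 ω) (c.U2 ω)) ∂base (n₀ + 1) Q N :=
            c.ofReal_le_cost hN hα hβ hm (Nat.succ_ne_zero _)
        _ ≤ ∫⁻ ω, (ENNReal.ofReal (α * P + β * S) + ENNReal.ofReal ((α + β) * D ω))
            ∂base (n₀ + 1) Q N := lintegral_mono fun ω =>
              (ENNReal.ofReal_le_ofReal (hle ω)).trans ENNReal.ofReal_add_le
        _ ≤ _ := by
            rw [lintegral_add_left measurable_const]
            simpa using hint
    · calc ENNReal.ofReal (-(α * P + β * S))
          = ∫⁻ _, ENNReal.ofReal (-(α * P + β * S)) ∂base (n₀ + 1) Q N := by simp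
        _ ≤ _ := (lintegral_mono fun ω => ENNReal.ofReal_le_ofReal (by
            linarith [hle ω, hnn ω])).trans hint
  have hL : 0 ≤ α * P + β * S := by
    by_contra hneg
    have hpos : 0 < -(α * P + β * S) / (2 * (α + β)) := by
      have := neg_pos.2 (not_le.1 hneg); positivity
    have h2 := (ENNReal.ofReal_le_ofReal_iff (by positivity)).1 (key _ hpos).2
    have h3 : (α + β) * (-(α * P + β * S) / (2 * (α + β))) = -(α * P + β * S) / 2 := by
      field_simp
    linarith
  refine le_of_forall_pos_le_add fun ε hε => ?_
  have h1 := (key (ε / (α + β)) (by positivity)).1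
  rw [mul_div_cancel₀ _ hαβ.ne', ← ENNReal.ofReal_add hL hε.le] at h1
  exact (ENNReal.ofReal_le_ofReal_iff (by positivity)).1 h1

/-- The centred empirical mean of `F` over the first `k` letters. -/
def centredMean {Ω : Type*} [MeasurableSpace Ω] (ν : Measure Ω) (F : Ω → ℝ) (k : ℕ)
    (ω : ℕ → Ω) : ℝ :=
  (k : ℝ)⁻¹ * ∑ i ∈ Finset.range k, F (ω i) - ∫ q, F q ∂ν

section LawOfLargeNumbers

open Filter Topology

variable {Ω : Type*} [MeasurableSpace Ω] (ν : Measure Ω)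

lemma measurable_centredMean {F : Ω → ℝ} (hF : Measurable F) (k : ℕ) :
    Measurable (centredMean ν F k) := by
  unfold centredMean; fun_prop

variable [IsProbabilityMeasure ν]

lemma tendsto_lintegral_centredMean {F : Ω → ℝ} (hF : Measurable F) (hi : Integrable F ν) :
    Tendsto (fun k => ∫⁻ ω, ‖centredMean ν F k ω‖ₑ ∂Measure.infinitePi fun _ : ℕ => ν) atTop
      (𝓝 0) := by
  have hev := fun i : ℕ => measurePreserving_eval_infinitePi (fun _ : ℕ => ν) i
  have hind : iIndepFun (fun (i : ℕ) (ω : ℕ → Ω) => F (ω i))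
      (Measure.infinitePi fun _ : ℕ => ν) :=
    iIndepFun_infinitePi (P := fun _ : ℕ => ν) (X := fun _ => F) fun _ => hF
  have h := strong_law_Lp (μ := Measure.infinitePi fun _ : ℕ => ν) le_rfl ENNReal.one_ne_top
    (fun (i : ℕ) (ω : ℕ → Ω) => F (ω i))
    (memLp_one_iff_integrable.2 ((hev 0).integrable_comp_of_integrable hi))
    (fun i j hij => hind.indepFun hij)
    (fun i => ⟨(hF.comp (measurable_pi_apply i)).aemeasurable,
      (hF.comp (measurable_pi_apply 0)).aemeasurable, by
        have hmap : ∀ j, (Measure.infinitePi fun _ : ℕ => ν).map (fun ω => F (ω j)) = ν.map F :=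
          fun j => by
            conv_rhs => rw [← (hev j).map_eq]
            exact (Measure.map_map hF (measurable_pi_apply j)).symm
        rw [hmap, hmap]⟩)
  have hmean : ∫ ω : ℕ → Ω, F (ω 0) ∂(Measure.infinitePi fun _ : ℕ => ν) = ∫ q, F q ∂ν := by
    conv_rhs => rw [← (hev 0).map_eq]
    exact (integral_map (measurable_pi_apply 0).aemeasurable hF.aestronglyMeasurable).symm
  simpa only [centredMean, hmean, eLpNorm_one_eq_lintegral_enorm, smul_eq_mul] using h

/-- The law of large numbers for two letter costs that share the block in proportion `r`. -/
lemma tendsto_lintegral_sharedMean {A B : Ω → ℝ} (hA : Measurable A) (hB : Measurable B)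
    (hiA : Integrable A ν) (hiB : Integrable B ν) {r : ℝ} (hr : 0 ≤ r) (hr1 : r ≤ 1) :
    Tendsto (fun n : ℕ => ∫⁻ ω, ENNReal.ofReal |(r * ∫ q, A q ∂ν + (1 - r) * ∫ q, B q ∂ν) -
      1 / (n : ℝ) * ∑ t : Fin n, if (t : ℕ) < ⌊r * n⌋₊ then A (ω t) else B (ω t)|
        ∂Measure.pi fun _ : Fin n => ν) atTop (𝓝 0) := by
  set D : Ω → ℝ := fun q => A q - B q with hD
  have hDm : Measurable D := hA.sub hB
  have hiD : Integrable D ν := hiA.sub hiB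
  have hmD : ∫ q, D q ∂ν = ∫ q, A q ∂ν - ∫ q, B q ∂ν := integral_sub hiA hiB
  set ρ := Measure.infinitePi fun _ : ℕ => ν with hρ
  have hquot : Tendsto (fun n : ℕ => (⌊r * n⌋₊ : ℝ) / n) atTop (𝓝 r) :=
    (tendsto_nat_floor_mul_div_atTop hr).comp tendsto_natCast_atTop_atTop
  have hB0 := tendsto_lintegral_centredMean ν hB hiB
  have hD0 : Tendsto (fun n : ℕ => ENNReal.ofReal ((⌊r * n⌋₊ : ℝ) / n) *
      ∫⁻ ω, ‖centredMean ν D ⌊r * n⌋₊ ω‖ₑ ∂ρ) atTop (𝓝 0) := by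
    rcases hr.eq_or_lt with rfl | hr0
    · simp
    · have hk : Tendsto (fun n : ℕ => ⌊r * n⌋₊) atTop atTop :=
        tendsto_nat_floor_atTop.comp (tendsto_natCast_atTop_atTop.const_mul_atTop hr0)
      have h := ENNReal.Tendsto.mul (ENNReal.tendsto_ofReal hquot)
        (Or.inr ENNReal.zero_ne_top) ((tendsto_lintegral_centredMean ν hDm hiD).comp hk)
        (Or.inr ENNReal.ofReal_ne_top)
      simpa using h
  have hc0 : Tendsto (fun n : ℕ => ‖(r - (⌊r * n⌋₊ : ℝ) / n) * ∫ q, D q ∂ν‖ₑ) atTop (𝓝 0) := by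
    have h := ((tendsto_const_nhds (x := r)).sub hquot).mul_const (∫ q, D q ∂ν)
    simpa using h.enorm
  have hlim := (hB0.add hD0).add hc0
  rw [add_zero, add_zero] at hlim
  refine tendsto_of_tendsto_of_tendsto_of_le_of_le' tendsto_const_nhds hlim
    (Eventually.of_forall fun _ => zero_le) ?_
  filter_upwards [eventually_ge_atTop 1] with n hn
  have hn0 : (n : ℝ) ≠ 0 := by positivity
  have hkn : ⌊r * n⌋₊ ≤ n := by
    refine Nat.floor_le_of_le ?_
    nlinarith [(Nat.cast_nonneg n : (0 : ℝ) ≤ n)]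
  set k := ⌊r * n⌋₊ with hk
  have hres : (Measure.infinitePi fun _ : ℕ => ν).map (fun ω (t : Fin n) => ω t) =
      Measure.pi fun _ : Fin n => ν := by
    rw [← Measure.infinitePi_eq_pi]
    exact Measure.map_infinitePi_infinitePi_of_inj (P := fun _ : ℕ => ν) Fin.val_injective
  rw [← hres, lintegral_map ?_ (by fun_prop)]
  · have herr : ∀ ω : ℕ → Ω, (r * ∫ q, A q ∂ν + (1 - r) * ∫ q, B q ∂ν) -
        1 / (n : ℝ) * ∑ t : Fin n, (if (t : ℕ) < k then A (ω t) else B (ω t)) =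
        -centredMean ν B n ω - ((k : ℝ) / n) * centredMean ν D k ω +
          (r - (k : ℝ) / n) * ∫ q, D q ∂ν := fun ω => by
      have hs : ∑ t : Fin n, (if (t : ℕ) < k then A (ω t) else B (ω t)) =
          ∑ i ∈ Finset.range n, B (ω i) + ∑ i ∈ Finset.range k, D (ω i) := by
        rw [Fin.sum_univ_eq_sum_range (fun i => if i < k then A (ω i) else B (ω i)) n,
          ← Finset.sum_range_add_sum_Ico _ hkn,
          ← Finset.sum_range_add_sum_Ico (fun i => B (ω i)) hkn,
          Finset.sum_congr rfl fun i hi => if_pos (Finset.mem_range.1 hi),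
          Finset.sum_congr rfl fun i hi => if_neg (not_lt.2 (Finset.mem_Ico.1 hi).1)]
        simp only [hD, Finset.sum_sub_distrib]
        ring
      have hcm : ((k : ℝ) / n) * centredMean ν D k ω =
          (1 / (n : ℝ)) * ∑ i ∈ Finset.range k, D (ω i) - (k / n) * ∫ q, D q ∂ν := by
        rw [centredMean]
        rcases Nat.eq_zero_or_pos k with h0 | h0
        · simp [h0]
        · have : (k : ℝ) ≠ 0 := by positivity
          field_simp
      rw [hs, hcm, centredMean, hmD]
      field_simp
      ring
    have hmB := measurable_centredMean ν hB n
    have hmD' := measurable_centredMean ν hDm k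
    calc ∫⁻ ω, ENNReal.ofReal |(r * ∫ q, A q ∂ν + (1 - r) * ∫ q, B q ∂ν) -
          1 / (n : ℝ) * ∑ t : Fin n, (if (t : ℕ) < k then A (ω t) else B (ω t))| ∂ρ
        ≤ ∫⁻ ω, (‖centredMean ν B n ω‖ₑ + ENNReal.ofReal ((k : ℝ) / n) * ‖centredMean ν D k ω‖ₑ +
            ‖(r - (k : ℝ) / n) * ∫ q, D q ∂ν‖ₑ) ∂ρ := lintegral_mono fun ω => by
          dsimp only
          rw [herr, ← Real.enorm_eq_ofReal_abs]
          refine (enorm_add_le _ _).trans (add_le_add_left ((enorm_sub_le).trans_eq ?_) _)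
          rw [enorm_neg, enorm_mul, Real.enorm_of_nonneg (r := (k : ℝ) / n) (by positivity)]
      _ = _ := by
          rw [lintegral_add_left (by fun_prop), lintegral_add_left (by fun_prop),
            lintegral_const_mul _ (by fun_prop), lintegral_const, measure_univ, mul_one]
  · refine Measurable.ennreal_ofReal (Measurable.abs (measurable_const.sub
      (measurable_const.mul (Finset.measurable_sum _ fun t _ => ?_))))
    split_ifs
    · exact hA.comp (measurable_pi_apply t)
    · exact hB.comp (measurable_pi_apply t)

end LawOfLargeNumbers

/-- The design that applies one memoryless policy before time `k` and another one afterwards. -/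
def sharedDesign (n k : ℕ) {f g f' g' : ℝ → ℝ → ℝ} (hf : Measurable (Function.uncurry f))
    (hg : Measurable (Function.uncurry g)) (hf' : Measurable (Function.uncurry f'))
    (hg' : Measurable (Function.uncurry g')) : Design n where
  enc t x v := if (t : ℕ) < k then f (x t) v else f' (x t) v
  dec t y w := if (t : ℕ) < k then g (y t) w else g' (y t) w
  enc_meas t := by
    have h : Measurable fun p : Path n × ℝ => (p.1 t, p.2) := by fun_prop
    split_ifs
    · exact hf.comp h
    · exact hf'.comp h
  dec_meas t := by
    have h : Measurable fun p : Path n × ℝ => (p.1 t, p.2) := by fun_prop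
    split_ifs
    · exact hg.comp h
    · exact hg'.comp h
  enc_causal t x x' v h := by rw [h t le_rfl]
  dec_causal t y y' w h := by rw [h t le_rfl]

/-- Each one-shot cost pair is the pair of mean letter costs of a seeded memoryless policy. -/
lemma exists_letter_policy_of_mem_oneShot {Q N : ℝ≥0} (hN : 0 < N) {a : ℝ × ℝ}
    (ha : a ∈ oneShot Q N) :
    ∃ f g : ℝ → ℝ → ℝ, Measurable (Function.uncurry f) ∧ Measurable (Function.uncurry g) ∧
      (Measurable fun q : ℝ × ℝ × ℝ × ℝ => f q.1 q.2.2.1 ^ 2) ∧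
      (Measurable fun q : ℝ × ℝ × ℝ × ℝ =>
        (q.1 + f q.1 q.2.2.1 - g (q.1 + f q.1 q.2.2.1 + q.2.1) q.2.2.2) ^ 2) ∧
      (Integrable (fun q => f q.1 q.2.2.1 ^ 2) (letterLaw Q N) ∧
        a.1 = ∫ q, f q.1 q.2.2.1 ^ 2 ∂letterLaw Q N) ∧
      (Integrable (fun q => (q.1 + f q.1 q.2.2.1 - g (q.1 + f q.1 q.2.2.1 + q.2.1) q.2.2.2) ^ 2)
          (letterLaw Q N) ∧
        a.2 = ∫ q, (q.1 + f q.1 q.2.2.1 - g (q.1 + f q.1 q.2.2.1 + q.2.1) q.2.2.2) ^ 2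
          ∂letterLaw Q N) := by
  obtain ⟨f, g, hf, hg, hP, hS⟩ := exists_policy_of_mem_oneShot hN ha
  have ha0 := nonneg_of_mem_oneShot a ha
  have hf' : Measurable fun q : ℝ × ℝ × ℝ × ℝ => f q.1 q.2.2.1 :=
    hf.comp (f := fun q : ℝ × ℝ × ℝ × ℝ => (q.1, q.2.2.1)) (by fun_prop)
  have hg' : Measurable fun q : ℝ × ℝ × ℝ × ℝ =>
      g (q.1 + f q.1 q.2.2.1 + q.2.1) q.2.2.2 :=
    hg.comp (f := fun q : ℝ × ℝ × ℝ × ℝ => (q.1 + f q.1 q.2.2.1 + q.2.1, q.2.2.2)) (by fun_prop)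
  refine ⟨f, g, hf, hg, by fun_prop, by fun_prop, ?_, ?_⟩
  · refine integrable_and_eq_integral_of_lintegral_ofReal_eq (by fun_prop)
      (fun q => sq_nonneg _) ha0.1 ?_
    rw [lintegral_letterLaw Q N (by fun_prop)]
    simpa using hP
  · refine integrable_and_eq_integral_of_lintegral_ofReal_eq (by fun_prop)
      (fun q => sq_nonneg _) ha0.2 ?_
    rw [lintegral_letterLaw Q N (by fun_prop)]
    exact hS

open Filter Topology in
/-- Every point of the time-sharing hull of the one-shot region is achievable. -/
lemma achievable_of_mem_chordHull {Q N : ℝ≥0} (hN : 0 < N) {P S : ℝ}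
    (h : (P, S) ∈ chordHull (oneShot Q N)) : achievable Q N P S := by
  obtain ⟨a, ha, b, hb, r, ⟨hr0, hr1⟩, hx⟩ := h
  obtain ⟨f, g, hf, hg, hmP, hmS, ⟨hiP, hP⟩, hiS, hS⟩ := exists_letter_policy_of_mem_oneShot hN ha
  obtain ⟨f', g', hf', hg', hmP', hmS', ⟨hiP', hP'⟩, hiS', hS'⟩ :=
    exists_letter_policy_of_mem_oneShot hN hb
  have hPr : P = r * a.1 + (1 - r) * b.1 := by simpa using congrArg Prod.fst hx
  have hSr : S = r * a.2 + (1 - r) * b.2 := by simpa using congrArg Prod.snd hx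
  have hlimP := tendsto_lintegral_sharedMean (letterLaw Q N) hmP hmP' hiP hiP' hr0 hr1
  have hlimS := tendsto_lintegral_sharedMean (letterLaw Q N) hmS hmS' hiS hiS' hr0 hr1
  rw [← hP, ← hP', ← hPr] at hlimP
  rw [← hS, ← hS', ← hSr] at hlimS
  have hlim := hlimP.add hlimS
  rw [add_zero] at hlim
  intro ε hε
  obtain ⟨n₀, hn₀⟩ := eventually_atTop.1 (hlim.eventually_le_const (ENNReal.ofReal_pos.2 hε))
  refine ⟨n₀, fun n hn => ⟨sharedDesign n ⌊r * n⌋₊ hf hg hf' hg',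
    le_trans (le_of_eq ?_) (hn₀ n hn)⟩⟩
  set c := sharedDesign n ⌊r * n⌋₊ hf hg hf' hg' with hc
  have h1 := c.measurable_U1
  have h2 := c.measurable_X1
  have h3 := c.measurable_U2
  have hmcP : Measurable fun ω => ENNReal.ofReal |P - costP (c.U1 ω)| := by
    unfold costP; fun_prop
  have hmcS : Measurable fun ω => ENNReal.ofReal |S - costS (c.X1 ω) (c.U2 ω)| := by
    unfold costS; fun_prop
  have hmp := measurePreserving_sampleOfLetters n Q N
  simp_rw [ENNReal.ofReal_add (abs_nonneg _) (abs_nonneg _)]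
  rw [lintegral_add_left hmcP, ← hmp.lintegral_comp hmcP, ← hmp.lintegral_comp hmcS]
  congr 1
  · refine lintegral_congr fun ω => congrArg (fun v => ENNReal.ofReal |P - 1 / (n : ℝ) * v|)
      (Finset.sum_congr rfl fun t _ => ?_)
    simp only [Design.U1, hc, sharedDesign]
    split_ifs <;> rfl
  · refine lintegral_congr fun ω => congrArg (fun v => ENNReal.ofReal |S - 1 / (n : ℝ) * v|)
      (Finset.sum_congr rfl fun t _ => ?_)
    simp only [Design.U2, Design.Y1, Design.X1, Design.U1, hc, sharedDesign]
    split_ifs <;> rfl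

/-- **Theorem 1** (causal encoding and causal decoding): the pair of Witsenhausen costs
`(P, S)` is achievable if and only if there exists a joint distribution of
`(X₀, T, U₁, X₁, Y₁, U₂)` decomposing according to
`P_{X₀} P_T P_{U₁|X₀,T} P_{X₁,Y₁|X₀,U₁} P_{U₂|T,Y₁}`, where the time-sharing variable `T`
takes values in a set of cardinality at most `2`, such that `P = E[U₁²]` and
`S = E[(X₁ - U₂)²]`. -/
theorem achievable_iff_exists_decomposition (Q N : ℝ≥0) (hQ : 0 < Q) (hN : 0 < N)
    (P S : ℝ) :
    achievable Q N P S ↔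
      ∃ (T : Type) (mT : MeasurableSpace T) (fT : Fintype T),
        Fintype.card T ≤ 2 ∧ ∃ d : SLDecomp Q N T, d.realizes P S := by
  constructor
  · intro h
    exact ⟨Bool, inferInstance, inferInstance, by simp,
      exists_realizes_of_mem_chordHull hN (mem_chordHull_of_achievable hN h)⟩
  · rintro ⟨T, mT, -, -, d, hd⟩
    exact achievable_of_mem_chordHull hN (SLDecomp.mem_chordHull_of_realizes hN hd)

end

end Witsenhausen
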